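/- arXiv:1202.3677 — 2 statements merged into one kernel-verified Lean document; each statement's English description precedes it below -/
import Mathlib

section
/- Let U ⊆ ℝⁿ be open, let g be a smooth Riemannian metric on U with components g_{ij} and inverse (co-metric) components g^{ij}, and let α = α_i dx^i, β = β_i dx^i be 1-forms with constant coefficients α_i, β_i. Then, with subscripts after a comma denoting partial derivatives and summation over repeated indices, g(R(α♯,β♯)β♯,α♯) = (α_i β_k − α_k β_i)(α_j β_l − α_l β_j)( R₁^{ijkl} + R₂^{ijkl} + R₃^{ijkl} ), where R₁^{ijkl} = (1/2) g^{is} (g^{jt} g^{kl}_{,t})_{,s}, R₂^{ijkl} = −(1/8) g^{ij}_{,s} g^{st} g^{kl}_{,t}, and R₃^{ijkl} = −(3/4) g^{is} g^{kp}_{,s} g_{pq} g^{jt} g^{lq}_{,t}. -/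
/-!
Local-coordinate (chart) model of a Riemannian manifold: points are elements
of `ℝⁿ`, vector fields and 1-forms are given by their component functions on
an open set `U`, and the metric by its matrix of components.
-/

noncomputable section

namespace RG

/-- Points of the chart. -/
abbrev Pt (n : ℕ) : Type := Fin n → ℝ
/-- Vector fields, by components. -/
abbrev VF (n : ℕ) : Type := Pt n → Fin n → ℝ
/-- 1-forms, by components. -/
abbrev OneForm (n : ℕ) : Type := Pt n → Fin n → ℝ
/-- Metric tensors, by components. -/
abbrev Met (n : ℕ) : Type := Pt n → Matrix (Fin n) (Fin n) ℝ

variable {n : ℕ}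

/-- Partial derivative `∂ₛ f`. -/
def pd (s : Fin n) (f : Pt n → ℝ) : Pt n → ℝ := fun x => fderiv ℝ f x (Pi.single s 1)

/-- Directional derivative `X f` of a function along a vector field. -/
def dder (X : VF n) (f : Pt n → ℝ) : Pt n → ℝ := fun x => fderiv ℝ f x (X x)

/-- Lie bracket `[X, Y]` of vector fields. -/
def bracket (X Y : VF n) : VF n :=
  fun x k => fderiv ℝ (fun y => Y y k) x (X x) - fderiv ℝ (fun y => X y k) x (Y x)

/-- The inverse (co-)metric `g⁻¹`. -/
def ginv (g : Met n) : Met n := fun x => (g x)⁻¹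

/-- Pairing `α(X)` of a 1-form with a vector field. -/
def pairF (α : OneForm n) (X : VF n) : Pt n → ℝ := fun x => ∑ i, α x i * X x i

/-- Metric inner product `g(X,Y)` of vector fields. -/
def gV (g : Met n) (X Y : VF n) : Pt n → ℝ := fun x => ∑ i, ∑ j, g x i j * X x i * Y x j

/-- Co-metric inner product `g⁻¹(α,β)` of 1-forms. -/
def gF (g : Met n) (α β : OneForm n) : Pt n → ℝ :=
  fun x => ∑ i, ∑ j, ginv g x i j * α x i * β x j

/-- Raising indices: `α♯ = g⁻¹ α`. -/
def sharp (g : Met n) (α : OneForm n) : VF n := fun x k => ∑ i, ginv g x i k * α x i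

/-- Lowering indices: `X♭ = g X`. -/
def flat (g : Met n) (X : VF n) : OneForm n := fun x k => ∑ i, g x i k * X x i

/-- Differential `df` of a function, as a 1-form. -/
def dF (f : Pt n → ℝ) : OneForm n := fun x i => pd i f x

/-- Exterior derivative of a 1-form, evaluated on two vector fields:
`dα(X,Y) = Σ (∂ᵢα_j − ∂_jαᵢ) Xⁱ Y^j`. -/
def dOne (α : OneForm n) (X Y : VF n) : Pt n → ℝ :=
  fun x => ∑ i, ∑ j, (pd i (fun y => α y j) x - pd j (fun y => α y i) x) * X x i * Y x j

/-- Christoffel symbols `Γ^k_{ij}` of the Levi-Civita connection. -/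
def chr (g : Met n) (k i j : Fin n) : Pt n → ℝ :=
  fun x => (1/2) * ∑ l, ginv g x k l *
    (pd i (fun y => g y j l) x + pd j (fun y => g y i l) x - pd l (fun y => g y i j) x)

/-- Levi-Civita covariant derivative `∇_X Y` of a vector field. -/
def covV (g : Met n) (X Y : VF n) : VF n :=
  fun x k => fderiv ℝ (fun y => Y y k) x (X x) + ∑ i, ∑ j, chr g k i j x * X x i * Y x j

/-- Levi-Civita covariant derivative `∇_X α` of a 1-form, characterized by
`(∇_X α)(Y) = X(α(Y)) − α(∇_X Y)`. -/
def covF (g : Met n) (X : VF n) (α : OneForm n) : OneForm n :=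
  fun x j => fderiv ℝ (fun y => α y j) x (X x) - ∑ i, ∑ k, X x i * chr g k i j x * α x k

/-- Riemann curvature tensor `R(X,Y)Z = ∇_X∇_Y Z − ∇_Y∇_X Z − ∇_{[X,Y]}Z`. -/
def Rcurv (g : Met n) (X Y Z : VF n) : VF n :=
  covV g X (covV g Y Z) - covV g Y (covV g X Z) - covV g (bracket X Y) Z

/-- Lie derivative of a 1-form along a vector field. -/
def lieF (X : VF n) (α : OneForm n) : OneForm n :=
  fun x i => fderiv ℝ (fun y => α y i) x (X x) + ∑ s, α x s * pd i (fun y => X y s) x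

/-- Lie derivative of a contravariant 2-tensor (such as the co-metric `g⁻¹`). -/
def lieCo (X : VF n) (G : Met n) : Met n :=
  fun x => Matrix.of fun i j =>
    fderiv ℝ (fun y => G y i j) x (X x)
      - ∑ s, G x s j * pd s (fun y => X y i) x
      - ∑ s, G x i s * pd s (fun y => X y j) x

/-- Evaluation of a contravariant 2-tensor on a pair of 1-forms. -/
def evCo (G : Met n) (α β : OneForm n) : Pt n → ℝ :=
  fun x => ∑ i, ∑ j, G x i j * α x i * β x j

/-- Smoothness of (the components of) a 1-form or vector field on `U`. -/
def SmoothSec (U : Set (Pt n)) (ω : Pt n → Fin n → ℝ) : Prop :=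
  ∀ i, ContDiffOn ℝ (⊤ : ℕ∞) (fun y => ω y i) U

/-- Smoothness of the metric components on `U`. -/
def SmoothMet (U : Set (Pt n)) (g : Met n) : Prop :=
  ∀ i j, ContDiffOn ℝ (⊤ : ℕ∞) (fun y => g y i j) U

/-- `g` is a smooth Riemannian metric on `U`. -/
def IsRiemannOn (U : Set (Pt n)) (g : Met n) : Prop :=
  SmoothMet U g ∧ ∀ x ∈ U, (g x).IsSymm ∧ (g x).PosDef

/-- A 1-form is closed on `U`. -/
def IsClosedOn (U : Set (Pt n)) (α : OneForm n) : Prop :=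
  ∀ x ∈ U, ∀ i j, pd i (fun y => α y j) x = pd j (fun y => α y i) x

end RG

open RG

namespace RGaux

variable {n : ℕ} {U : Set (Pt n)} {g : Met n}

/-- Smoothness on `U`. -/
def Sm (U : Set (Pt n)) (f : Pt n → ℝ) : Prop := ContDiffOn ℝ (⊤ : ℕ∞) f U

theorem Sm.diff {f : Pt n → ℝ} (h : Sm U f) (hU : IsOpen U) {x : Pt n} (hx : x ∈ U) :
    DifferentiableAt ℝ f x :=
  ((h.contDiffAt (hU.mem_nhds hx)).differentiableAt (by simp))

theorem Sm.add {f h : Pt n → ℝ} (hf : Sm U f) (hh : Sm U h) : Sm U (fun y => f y + h y) :=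
  ContDiffOn.add hf hh

theorem Sm.sub {f h : Pt n → ℝ} (hf : Sm U f) (hh : Sm U h) : Sm U (fun y => f y - h y) :=
  ContDiffOn.sub hf hh

theorem Sm.mul {f h : Pt n → ℝ} (hf : Sm U f) (hh : Sm U h) : Sm U (fun y => f y * h y) :=
  ContDiffOn.mul hf hh

theorem Sm.const (c : ℝ) : Sm U (fun _ => c) := contDiffOn_const

theorem Sm.sum {ι : Type*} [Fintype ι] {f : ι → Pt n → ℝ} (hf : ∀ i, Sm U (f i)) :
    Sm U (fun y => ∑ i, f i y) :=
  ContDiffOn.sum (fun i _ => hf i)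

theorem Sm.prod {ι : Type*} [Fintype ι] {f : ι → Pt n → ℝ} (hf : ∀ i, Sm U (f i)) :
    Sm U (fun y => ∏ i, f i y) :=
  contDiffOn_prod (fun i _ => hf i)

theorem fderiv_vec (f : Pt n → ℝ) (x v : Pt n) :
    fderiv ℝ f x v = ∑ s, v s * pd s f x := by
  conv_lhs => rw [pi_eq_sum_univ' v]
  simp [pd, map_sum]

theorem Sm.pd {f : Pt n → ℝ} (hf : Sm U f) (hU : IsOpen U) (s : Fin n) : Sm U (pd s f) :=
  (ContDiffOn.fderiv_of_isOpen hf hU (m := (⊤ : ℕ∞)) (by exact_mod_cast le_rfl)).clm_apply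
    contDiffOn_const

theorem Sm.dder {f : Pt n → ℝ} {X : VF n} (hf : Sm U f) (hX : ∀ i, Sm U (fun y => X y i))
    (hU : IsOpen U) : Sm U (dder X f) := by
  have : RG.dder X f = fun y => ∑ s, X y s * RG.pd s f y := by
    funext y; exact fderiv_vec f y (X y)
  rw [this]
  exact Sm.sum fun s => (hX s).mul (hf.pd hU s)

theorem Sm.det {m : ℕ} {M : Pt n → Matrix (Fin m) (Fin m) ℝ}
    (h : ∀ i j, Sm U (fun y => M y i j)) : Sm U (fun y => (M y).det) := by
  simp only [Matrix.det_apply']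
  exact Sm.sum fun σ => (Sm.const _).mul (Sm.prod fun i => h _ _)

theorem sm_g (hg : IsRiemannOn U g) (i j : Fin n) : Sm U (fun y => g y i j) := hg.1 i j

theorem det_ne (hg : IsRiemannOn U g) {x : Pt n} (hx : x ∈ U) : (g x).det ≠ 0 :=
  (hg.2 x hx).2.det_pos.ne'

theorem sm_ginv (hg : IsRiemannOn U g) (i j : Fin n) : Sm U (fun y => ginv g y i j) := by
  have h1 : Sm U (fun y => (g y).det) := Sm.det (sm_g hg)
  have h2 : Sm U (fun y => ((g y).adjugate) i j) := by
    simp only [Matrix.adjugate_apply]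
    apply Sm.det
    intro p q
    by_cases h : p = j
    · subst h; simpa using Sm.const _
    · simpa [Matrix.updateRow_ne h] using sm_g hg p q
  have h3 : Sm U (fun y => ((g y).det)⁻¹) := ContDiffOn.inv h1 fun y hy => det_ne hg hy
  have : (fun y => ginv g y i j) = fun y => ((g y).det)⁻¹ * ((g y).adjugate) i j := by
    funext y
    simp [ginv, Matrix.inv_def, Ring.inverse_eq_inv']
  rw [this]
  exact h3.mul h2

theorem g_symm (hg : IsRiemannOn U g) {x : Pt n} (hx : x ∈ U) (i j : Fin n) :
    g x i j = g x j i := (hg.2 x hx).1.apply j i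

theorem ginv_symm (hg : IsRiemannOn U g) {x : Pt n} (hx : x ∈ U) (i j : Fin n) :
    ginv g x i j = ginv g x j i := by
  have h : ((g x)⁻¹).IsSymm := by
    rw [Matrix.IsSymm, Matrix.transpose_nonsing_inv, (hg.2 x hx).1.eq]
  exact h.apply j i

theorem g_ginv (hg : IsRiemannOn U g) {x : Pt n} (hx : x ∈ U) (i j : Fin n) :
    ∑ k, g x i k * ginv g x k j = if i = j then 1 else 0 := by
  have := Matrix.mul_nonsing_inv (g x) (IsUnit.mk0 _ (det_ne hg hx))
  have h2 := congrFun (congrFun this i) j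
  rw [Matrix.mul_apply, Matrix.one_apply] at h2
  exact h2

theorem pd_g_symm (hU : IsOpen U) (hg : IsRiemannOn U g) {x : Pt n} (hx : x ∈ U)
    (s i j : Fin n) : pd s (fun y => g y i j) x = pd s (fun y => g y j i) x := by
  unfold pd
  rw [Filter.EventuallyEq.fderiv_eq]
  filter_upwards [hU.mem_nhds hx] with y hy using g_symm hg hy i j

theorem pd_ginv_symm (hU : IsOpen U) (hg : IsRiemannOn U g) {x : Pt n} (hx : x ∈ U)
    (s i j : Fin n) : pd s (fun y => ginv g y i j) x = pd s (fun y => ginv g y j i) x := by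
  unfold pd
  rw [Filter.EventuallyEq.fderiv_eq]
  filter_upwards [hU.mem_nhds hx] with y hy using ginv_symm hg hy i j

theorem chr_symm (hU : IsOpen U) (hg : IsRiemannOn U g) {x : Pt n} (hx : x ∈ U)
    (k i j : Fin n) : chr g k i j x = chr g k j i x := by
  unfold chr
  congr 1
  refine Finset.sum_congr rfl fun l _ => ?_
  rw [pd_g_symm hU hg hx l i j]
  ring

theorem chr_low (hg : IsRiemannOn U g) {x : Pt n} (hx : x ∈ U)
    (l i j : Fin n) : ∑ k, g x l k * chr g k i j x = (1/2) *
    (pd i (fun y => g y j l) x + pd j (fun y => g y i l) x - pd l (fun y => g y i j) x) := by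
  have : ∀ m : Fin n, ∑ k, g x l k * ginv g x k m = if l = m then 1 else 0 := g_ginv hg hx l
  unfold chr
  simp only [Finset.mul_sum]
  rw [Finset.sum_comm]
  trans ∑ m, (∑ k, g x l k * ginv g x k m) * ((1/2) *
    (pd i (fun y => g y j m) x + pd j (fun y => g y i m) x - pd m (fun y => g y i j) x))
  · refine Finset.sum_congr rfl fun m _ => ?_
    rw [Finset.sum_mul]
    exact Finset.sum_congr rfl fun k _ => by ring
  · simp [this]

theorem sm_chr (hU : IsOpen U) (hg : IsRiemannOn U g) (k i j : Fin n) : Sm U (chr g k i j) :=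
  (Sm.const _).mul (Sm.sum fun l => (sm_ginv hg k l).mul
    ((((sm_g hg j l).pd hU i).add ((sm_g hg i l).pd hU j)).sub ((sm_g hg i j).pd hU l)))

/-- Smoothness of a vector field. -/
def SmV (U : Set (Pt n)) (X : VF n) : Prop := ∀ i, Sm U (fun y => X y i)

theorem sm_covV (hU : IsOpen U) (hg : IsRiemannOn U g) {X Y : VF n} (hX : SmV U X)
    (hY : SmV U Y) : SmV U (covV g X Y) := fun k =>
  ((hY k).dder hX hU).add (Sm.sum fun i => Sm.sum fun j =>
    ((sm_chr hU hg k i j).mul (hX i)).mul (hY j))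

theorem sm_sharp (hg : IsRiemannOn U g) (a : Fin n → ℝ) : SmV U (sharp g (fun _ => a)) :=
  fun k => Sm.sum fun i => (sm_ginv hg i k).mul (Sm.const _)

theorem sm_gF (hg : IsRiemannOn U g) (a b : Fin n → ℝ) :
    Sm U (gF g (fun _ => a) (fun _ => b)) :=
  Sm.sum fun i => Sm.sum fun j => ((sm_ginv hg i j).mul (Sm.const _)).mul (Sm.const _)

/-- The metric as a bilinear form at a point. -/
def bf (g : Met n) (x : Pt n) (u v : Fin n → ℝ) : ℝ := ∑ i, ∑ j, g x i j * u i * v j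

theorem bf_add_left (x u v w) : bf g x (u + v) w = bf g x u w + bf g x v w := by
  simp only [bf, ← Finset.sum_add_distrib, Pi.add_apply]
  exact Finset.sum_congr rfl fun i _ => Finset.sum_congr rfl fun j _ => by ring

theorem bf_add_right (x u v w) : bf g x w (u + v) = bf g x w u + bf g x w v := by
  simp only [bf, ← Finset.sum_add_distrib, Pi.add_apply]
  exact Finset.sum_congr rfl fun i _ => Finset.sum_congr rfl fun j _ => by ring

theorem bf_smul_left (x) (c : ℝ) (u w) : bf g x (c • u) w = c * bf g x u w := by
  simp only [bf, Finset.mul_sum, Pi.smul_apply, smul_eq_mul]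
  exact Finset.sum_congr rfl fun i _ => Finset.sum_congr rfl fun j _ => by ring

theorem bf_smul_right (x) (c : ℝ) (u w) : bf g x w (c • u) = c * bf g x w u := by
  simp only [bf, Finset.mul_sum, Pi.smul_apply, smul_eq_mul]
  exact Finset.sum_congr rfl fun i _ => Finset.sum_congr rfl fun j _ => by ring

theorem bf_sub_left (x u v w) : bf g x (u - v) w = bf g x u w - bf g x v w := by
  simp only [bf, ← Finset.sum_sub_distrib, Pi.sub_apply]
  exact Finset.sum_congr rfl fun i _ => Finset.sum_congr rfl fun j _ => by ring

theorem bf_sub_right (x u v w) : bf g x w (u - v) = bf g x w u - bf g x w v := by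
  simp only [bf, ← Finset.sum_sub_distrib, Pi.sub_apply]
  exact Finset.sum_congr rfl fun i _ => Finset.sum_congr rfl fun j _ => by ring

theorem bf_symm (hg : IsRiemannOn U g) {x : Pt n} (hx : x ∈ U) (u v) :
    bf g x u v = bf g x v u := by
  unfold bf
  rw [Finset.sum_comm]
  exact Finset.sum_congr rfl fun i _ => Finset.sum_congr rfl fun j _ => by
    rw [g_symm hg hx]; ring

/-- raising an index at a point -/
def rs (g : Met n) (x : Pt n) (p : Fin n → ℝ) : Fin n → ℝ := fun k => ∑ i, ginv g x i k * p i

theorem bf_rs (hg : IsRiemannOn U g) {x : Pt n} (hx : x ∈ U) (p w) :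
    bf g x (rs g x p) w = ∑ i, p i * w i := by
  rw [bf_symm hg hx]
  unfold bf rs
  refine Finset.sum_congr rfl fun i _ => ?_
  simp only [Finset.mul_sum]
  rw [Finset.sum_comm]
  trans ∑ m, (∑ k, g x i k * ginv g x k m) * (p m * w i)
  · refine Finset.sum_congr rfl fun m _ => ?_
    rw [Finset.sum_mul]
    exact Finset.sum_congr rfl fun k _ => by rw [ginv_symm hg hx m k]; ring
  · simp [g_ginv hg hx]

theorem bf_nondeg (hg : IsRiemannOn U g) {x : Pt n} (hx : x ∈ U) {u v : Fin n → ℝ}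
    (h : ∀ w, bf g x u w = bf g x v w) : u = v := by
  funext k
  have := h (rs g x (Pi.single k 1))
  rw [bf_symm hg hx, bf_symm hg hx v, bf_rs hg hx, bf_rs hg hx] at this
  simpa [Pi.single_apply] using this

theorem fderiv_sum' {ι : Type*} [Fintype ι] {f : ι → Pt n → ℝ} {x : Pt n}
    (h : ∀ i, DifferentiableAt ℝ (f i) x) (z : Pt n) :
    fderiv ℝ (fun y => ∑ i, f i y) x z = ∑ i, fderiv ℝ (f i) x z := by
  rw [fderiv_fun_sum fun i _ => h i]; simp

/-- metric compatibility -/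
theorem compat (hU : IsOpen U) (hg : IsRiemannOn U g) {x : Pt n} (hx : x ∈ U)
    {V W : VF n} (hV : SmV U V) (hW : SmV U W) (Z : VF n) :
    fderiv ℝ (gV g V W) x (Z x) =
      bf g x (covV g Z V x) (W x) + bf g x (V x) (covV g Z W x) := by
  have dg := fun i j => (sm_g hg i j).diff hU hx
  have dV := fun i => (hV i).diff hU hx
  have dW := fun i => (hW i).diff hU hx
  have h1 : fderiv ℝ (gV g V W) x (Z x) = ∑ i, ∑ j,
      ((∑ p, Z x p * pd p (fun y => g y i j) x) * V x i * W x j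
        + g x i j * fderiv ℝ (fun y => V y i) x (Z x) * W x j
        + g x i j * V x i * fderiv ℝ (fun y => W y j) x (Z x)) := by
    unfold gV
    rw [fderiv_sum' (fun i => DifferentiableAt.fun_sum fun j _ =>
      ((dg i j).fun_mul (dV i)).fun_mul (dW j))]
    refine Finset.sum_congr rfl fun i _ => ?_
    rw [fderiv_sum' (fun j => ((dg i j).fun_mul (dV i)).fun_mul (dW j))]
    refine Finset.sum_congr rfl fun j _ => ?_
    rw [fderiv_fun_mul ((dg i j).fun_mul (dV i)) (dW j), fderiv_fun_mul (dg i j) (dV i),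
      ← fderiv_vec]
    simp
    ring
  have key : ∀ (v w z : Fin n → ℝ),
      ∑ i, ∑ j, g x i j * (∑ p, ∑ q, chr g i p q x * z p * v q) * w j =
      ∑ p, ∑ q, ∑ j, z p * v q * w j * ((1/2) *
    (pd p (fun y => g y q j) x + pd q (fun y => g y p j) x - pd j (fun y => g y p q) x)) := by
    intro v w z
    simp only [← chr_low hg hx]
    simp only [Finset.mul_sum, Finset.sum_mul]
    rw [Finset.sum_comm]
    trans ∑ j, ∑ p, ∑ q, ∑ i, g x i j * (chr g i p q x * z p * v q) * w j
    · refine Finset.sum_congr rfl fun j _ => ?_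
      rw [Finset.sum_comm]
      refine Finset.sum_congr rfl fun p _ => ?_
      rw [Finset.sum_comm]
    · rw [Finset.sum_comm]
      refine Finset.sum_congr rfl fun p _ => ?_
      rw [Finset.sum_comm]
      refine Finset.sum_congr rfl fun q _ => ?_
      refine Finset.sum_congr rfl fun j _ => ?_
      refine Finset.sum_congr rfl fun i _ => ?_
      rw [g_symm hg hx i j]; ring
  have e1 : bf g x (covV g Z V x) (W x) =
      (∑ i, ∑ j, g x i j * fderiv ℝ (fun y => V y i) x (Z x) * W x j)
      + ∑ i, ∑ j, g x i j * (∑ p, ∑ q, chr g i p q x * Z x p * V x q) * W x j := by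
    simp only [bf, covV, ← Finset.sum_add_distrib]
    exact Finset.sum_congr rfl fun i _ => Finset.sum_congr rfl fun j _ => by ring
  have e2 : bf g x (V x) (covV g Z W x) =
      (∑ i, ∑ j, g x i j * V x i * fderiv ℝ (fun y => W y j) x (Z x))
      + ∑ i, ∑ j, g x i j * (∑ p, ∑ q, chr g i p q x * Z x p * W x q) * V x j := by
    rw [Finset.sum_comm (f := fun i j => g x i j * (∑ p, ∑ q, chr g i p q x * Z x p * W x q) * V x j)]
    simp only [bf, covV, ← Finset.sum_add_distrib]
    exact Finset.sum_congr rfl fun i _ => Finset.sum_congr rfl fun j _ => by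
      rw [g_symm hg hx j i]; ring
  have e3 : (∑ i, ∑ j, (∑ p, Z x p * pd p (fun y => g y i j) x) * V x i * W x j) =
      ∑ i, ∑ j, g x i j * (∑ p, ∑ q, chr g i p q x * Z x p * V x q) * W x j
      + ∑ i, ∑ j, g x i j * (∑ p, ∑ q, chr g i p q x * Z x p * W x q) * V x j := by
    rw [key, key]
    have : ∀ p, ∑ q, ∑ j, Z x p * W x q * V x j * ((1/2) *
        (pd p (fun y => g y q j) x + pd q (fun y => g y p j) x - pd j (fun y => g y p q) x)) =
        ∑ j, ∑ q, Z x p * W x q * V x j * ((1/2) *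
        (pd p (fun y => g y q j) x + pd q (fun y => g y p j) x - pd j (fun y => g y p q) x)) :=
      fun p => Finset.sum_comm
    simp only [this, ← Finset.sum_add_distrib, Finset.sum_mul]
    trans ∑ i, ∑ p, ∑ j, Z x p * pd p (fun y => g y i j) x * V x i * W x j
    · exact Finset.sum_congr rfl fun i _ => Finset.sum_comm
    rw [Finset.sum_comm]
    refine Finset.sum_congr rfl fun p _ => ?_
    refine Finset.sum_congr rfl fun i _ => ?_
    refine Finset.sum_congr rfl fun j _ => ?_
    rw [pd_g_symm hU hg hx p j i]
    ring
  rw [h1, e1, e2]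
  simp only [Finset.sum_add_distrib]
  rw [e3]
  ring

theorem torsion (hU : IsOpen U) (hg : IsRiemannOn U g) {x : Pt n} (hx : x ∈ U) (X Y : VF n) :
    covV g X Y x - covV g Y X x = bracket X Y x := by
  funext k
  have : ∑ i, ∑ j, chr g k i j x * X x i * Y x j = ∑ i, ∑ j, chr g k i j x * Y x i * X x j := by
    rw [Finset.sum_comm]
    exact Finset.sum_congr rfl fun i _ => Finset.sum_congr rfl fun j _ => by
      rw [chr_symm hU hg hx]; ring
  simp only [covV, bracket, Pi.sub_apply, this]
  ring

theorem gV_sharp_left (hg : IsRiemannOn U g) {x : Pt n} (hx : x ∈ U) (a : Fin n → ℝ) (W : VF n) :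
    gV g (sharp g (fun _ => a)) W x = ∑ i, a i * W x i :=
  bf_rs hg hx a (W x)

/-- `∇α♯` is self-adjoint for a constant form. -/
theorem selfadj (hU : IsOpen U) (hg : IsRiemannOn U g) {x : Pt n} (hx : x ∈ U) (a : Fin n → ℝ)
    (z w : Fin n → ℝ) :
    bf g x (covV g (fun _ => z) (sharp g (fun _ => a)) x) w =
    bf g x (covV g (fun _ => w) (sharp g (fun _ => a)) x) z := by
  have h : ∀ z w : Fin n → ℝ, bf g x (covV g (fun _ => z) (sharp g (fun _ => a)) x) w =
      - bf g x (sharp g (fun _ => a) x) (covV g (fun _ => z) (fun _ => w) x) := by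
    intro z w
    have h1 := compat hU hg hx (sm_sharp hg a) (W := fun _ => w) (fun i => Sm.const _) (fun _ => z)
    have h2 : fderiv ℝ (gV g (sharp g (fun _ => a)) (fun _ => w)) x = 0 := by
      have : gV g (sharp g (fun _ => a)) (fun _ => w) =ᶠ[nhds x] fun _ => ∑ i, a i * w i := by
        filter_upwards [hU.mem_nhds hx] with y hy using gV_sharp_left hg hy a _
      rw [this.fderiv_eq]; simp
    rw [h2] at h1
    simp at h1
    linarith
  have t := torsion hU hg hx (fun _ => z) (fun _ => w)
  have : bracket (fun _ => z) (fun _ => w) x = 0 := by funext k; simp [bracket]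
  rw [this, sub_eq_zero] at t
  rw [h, h, t]

theorem gV_sharp (hg : IsRiemannOn U g) {x : Pt n} (hx : x ∈ U) (a b : Fin n → ℝ) :
    gV g (sharp g (fun _ => a)) (sharp g (fun _ => b)) x = gF g (fun _ => a) (fun _ => b) x := by
  rw [gV_sharp_left hg hx]
  simp only [sharp, gF, Finset.mul_sum]
  exact Finset.sum_congr rfl fun i _ => Finset.sum_congr rfl fun j _ => by
    rw [ginv_symm hg hx]; ring

theorem fderiv_gF (hU : IsOpen U) (hg : IsRiemannOn U g) {x : Pt n} (hx : x ∈ U)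
    (a b : Fin n → ℝ) :
    fderiv ℝ (gF g (fun _ => a) (fun _ => b)) x =
      fderiv ℝ (gV g (sharp g (fun _ => a)) (sharp g (fun _ => b))) x := by
  refine Filter.EventuallyEq.fderiv_eq ?_
  filter_upwards [hU.mem_nhds hx] with y hy using (gV_sharp hg hy a b).symm

theorem symsum (hU : IsOpen U) (hg : IsRiemannOn U g) {x : Pt n} (hx : x ∈ U)
    (a b : Fin n → ℝ) (w : Fin n → ℝ) :
    bf g x (covV g (sharp g (fun _ => a)) (sharp g (fun _ => b)) x) w
    + bf g x (covV g (sharp g (fun _ => b)) (sharp g (fun _ => a)) x) w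
    = fderiv ℝ (gF g (fun _ => a) (fun _ => b)) x w := by
  rw [fderiv_gF hU hg hx, compat hU hg hx (sm_sharp hg a) (sm_sharp hg b) (fun _ => w)]
  have h1 := selfadj hU hg hx a w (sharp g (fun _ => b) x)
  have h2 := selfadj hU hg hx b w (sharp g (fun _ => a) x)
  rw [h1, bf_symm hg hx (sharp g (fun _ => a) x), h2]
  change _ = bf g x (covV g (sharp g (fun _ => b)) (sharp g (fun _ => a)) x) w +
    bf g x (covV g (sharp g (fun _ => a)) (sharp g (fun _ => b)) x) w
  ring

/-- gradient -/
def gd (g : Met n) (f : Pt n → ℝ) (x : Pt n) : Fin n → ℝ := rs g x (fun s => pd s f x)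

theorem bf_gd (hg : IsRiemannOn U g) {x : Pt n} (hx : x ∈ U) (f w) :
    bf g x (gd g f x) w = fderiv ℝ f x w := by
  rw [gd, bf_rs hg hx, fderiv_vec]
  exact Finset.sum_congr rfl fun i _ => mul_comm _ _

theorem gF_symm (hg : IsRiemannOn U g) {x : Pt n} (hx : x ∈ U)
    (a b : Fin n → ℝ) :
    gF g (fun _ => a) (fun _ => b) x = gF g (fun _ => b) (fun _ => a) x := by
  unfold gF
  rw [Finset.sum_comm]
  exact Finset.sum_congr rfl fun i _ => Finset.sum_congr rfl fun j _ => by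
      rw [ginv_symm hg hx]; ring


theorem fderiv_bracket (hU : IsOpen U) {x : Pt n} (hx : x ∈ U) {f : Pt n → ℝ} (hf : Sm U f)
    {X Y : VF n} (hX : SmV U X) (hY : SmV U Y) :
    fderiv ℝ f x (bracket X Y x) = dder X (dder Y f) x - dder Y (dder X f) x := by
  have dX : DifferentiableAt ℝ X x := differentiableAt_pi.2 fun i => (hX i).diff hU hx
  have dY : DifferentiableAt ℝ Y x := differentiableAt_pi.2 fun i => (hY i).diff hU hx
  have hc : ContDiffAt ℝ (⊤ : ℕ∞) f x := hf.contDiffAt (hU.mem_nhds hx)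
  have hs : IsSymmSndFDerivAt ℝ f x := hc.isSymmSndFDerivAt (by
    rw [minSmoothness_of_isRCLikeNormedField]; exact WithTop.coe_le_coe.2 le_top)
  have df : DifferentiableAt ℝ (fderiv ℝ f) x :=
    (hc.fderiv_right (m := (⊤ : ℕ∞)) (by exact_mod_cast le_rfl)).differentiableAt (by simp)
  have hb : bracket X Y x = fderiv ℝ Y x (X x) - fderiv ℝ X x (Y x) := by
    funext k
    have h1 : fderiv ℝ (fun y => Y y k) x (X x) = fderiv ℝ Y x (X x) k := by
      rw [fderiv_apply dY]; rfl
    have h2 : fderiv ℝ (fun y => X y k) x (Y x) = fderiv ℝ X x (Y x) k := by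
      rw [fderiv_apply dX]; rfl
    simp [bracket, h1, h2]
  rw [hb]
  unfold dder
  rw [fderiv_clm_apply df dY, fderiv_clm_apply df dX]
  simp [hs.eq (X x) (Y x)]

theorem dder_congr (hU : IsOpen U) {x : Pt n} (hx : x ∈ U) {f h : Pt n → ℝ}
    (e : ∀ y ∈ U, f y = h y) (X : VF n) : dder X f x = dder X h x := by
  unfold dder
  rw [Filter.EventuallyEq.fderiv_eq]
  filter_upwards [hU.mem_nhds hx] with y hy using e y hy

theorem lhs_eq (hU : IsOpen U) (hg : IsRiemannOn U g) {x : Pt n} (hx : x ∈ U)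
    (a b : Fin n → ℝ) (X Y : VF n) (hX : X = sharp g (fun _ => a)) (hY : Y = sharp g (fun _ => b))
    (A B C : Pt n → ℝ) (hA : A = gF g (fun _ => a) (fun _ => a))
    (hB : B = gF g (fun _ => b) (fun _ => b)) (hC : C = gF g (fun _ => a) (fun _ => b)) :
    gV g (Rcurv g X Y Y) X x =
      (1/2) * (dder X (dder X B) x + dder Y (dder Y A) x
        - dder X (dder Y C) x - dder Y (dder X C) x)
      + (1/4) * (bf g x (gd g C x) (gd g C x) - bf g x (gd g A x) (gd g B x))
      - (3/4) * bf g x (bracket X Y x) (bracket X Y x) := by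
  have sX : SmV U X := hX ▸ sm_sharp hg a
  have sY : SmV U Y := hY ▸ sm_sharp hg b
  have sA : Sm U A := hA ▸ sm_gF hg a a
  have sB : Sm U B := hB ▸ sm_gF hg b b
  have sC : Sm U C := hC ▸ sm_gF hg a b
  have kYY : ∀ y ∈ U, ∀ w, bf g y (covV g Y Y y) w = (1/2) * fderiv ℝ B y w := by
    intro y hy w
    have := symsum hU hg hy b b w
    rw [← hY, ← hB] at this
    linarith
  have kXX : ∀ y ∈ U, ∀ w, bf g y (covV g X X y) w = (1/2) * fderiv ℝ A y w := by
    intro y hy w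
    have := symsum hU hg hy a a w
    rw [← hX, ← hA] at this
    linarith
  have kXY : ∀ y ∈ U, ∀ w, bf g y (covV g X Y y) w + bf g y (covV g Y X y) w
      = fderiv ℝ C y w := by
    intro y hy w
    have := symsum hU hg hy a b w
    rwa [← hY, ← hX, ← hC] at this
  have tor : covV g X Y x - covV g Y X x = bracket X Y x := torsion hU hg hx X Y
  -- vector identities
  have vYY : covV g Y Y x = (1/2 : ℝ) • gd g B x := by
    refine bf_nondeg hg hx fun w => ?_
    rw [kYY x hx, bf_smul_left, bf_gd hg hx]
  have vXX : covV g X X x = (1/2 : ℝ) • gd g A x := by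
    refine bf_nondeg hg hx fun w => ?_
    rw [kXX x hx, bf_smul_left, bf_gd hg hx]
  have vsum : covV g X Y x + covV g Y X x = gd g C x := by
    refine bf_nondeg hg hx fun w => ?_
    rw [bf_add_left, kXY x hx, bf_gd hg hx]
  have vXY : covV g X Y x = (1/2 : ℝ) • (gd g C x + bracket X Y x) := by
    rw [← vsum, ← tor]; module
  have vYX : covV g Y X x = (1/2 : ℝ) • (gd g C x - bracket X Y x) := by
    rw [← vsum, ← tor]; module
  -- first term
  have t1 : bf g x (covV g X (covV g Y Y) x) (X x) =
      (1/2) * dder X (dder X B) x - bf g x (covV g Y Y x) (covV g X X x) := by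
    have h := compat hU hg hx (sm_covV hU hg sY sY) sX X
    have h2 : fderiv ℝ (gV g (covV g Y Y) X) x (X x) = (1/2) * dder X (dder X B) x := by
      have e := dder_congr hU hx (f := gV g (covV g Y Y) X) (h := fun y => (1/2) * dder X B y)
        (fun y hy => kYY y hy (X y)) X
      change dder X (gV g (covV g Y Y) X) x = _
      rw [e]
      have d := (sB.dder sX hU).diff hU hx
      change fderiv ℝ (fun y => (1/2) * dder X B y) x (X x) = _
      rw [fderiv_const_mul d]
      rfl
    linarith
  have t2 : bf g x (covV g Y (covV g X Y) x) (X x) =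
      dder Y (dder X C) x - (1/2) * dder Y (dder Y A) x
        - bf g x (covV g X Y x) (covV g Y X x) := by
    have h := compat hU hg hx (sm_covV hU hg sX sY) sX Y
    have h2 : fderiv ℝ (gV g (covV g X Y) X) x (Y x) =
        dder Y (dder X C) x - (1/2) * dder Y (dder Y A) x := by
      have e := dder_congr hU hx (f := gV g (covV g X Y) X)
        (h := fun y => dder X C y - (1/2) * dder Y A y)
        (fun y hy => by
          have c := compat hU hg hy sX sY X
          have c2 := fderiv_gF hU hg hy a b
          rw [← hX, ← hY, ← hC] at c2
          rw [← c2, kXX y hy, bf_symm hg hy (X y)] at c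
          change bf g y (covV g X Y y) (X y) = fderiv ℝ C y (X y) - (1/2) * fderiv ℝ A y (Y y)
          linarith) Y
      change dder Y (gV g (covV g X Y) X) x = _
      rw [e]
      have d := (sA.dder sY hU).diff hU hx
      have d' := (sC.dder sX hU).diff hU hx
      change fderiv ℝ (fun y => dder X C y - (1/2) * dder Y A y) x (Y x) = _
      rw [fderiv_fun_sub d' (d.const_mul _), fderiv_const_mul d]
      rfl
    linarith
  have t3 : bf g x (covV g (bracket X Y) Y x) (X x) =
      bf g x (covV g X Y x) (bracket X Y x) := by
    have := selfadj hU hg hx b (bracket X Y x) (X x)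
    rw [← hY] at this
    exact this
  have br := fderiv_bracket hU hx sC sX sY
  rw [← bf_gd hg hx] at br
  change bf g x (covV g X (covV g Y Y) x - covV g Y (covV g X Y) x - covV g (bracket X Y) Y x) (X x)
    = _
  rw [bf_sub_left, bf_sub_left, t1, t2, t3, vYY, vXX, vXY, vYX]
  simp only [bf_smul_left, bf_smul_right, bf_add_left, bf_sub_right]
  rw [bf_symm hg hx (gd g B x), bf_symm hg hx (bracket X Y x) (gd g C x), br]
  ring

/-- contraction of a 4-tensor with four vectors -/
def E4 (T : Fin n → Fin n → Fin n → Fin n → ℝ) (a b c d : Fin n → ℝ) : ℝ :=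
  ∑ i, ∑ j, ∑ k, ∑ l, a i * b j * c k * d l * T i j k l

theorem contr (a b : Fin n → ℝ) (T1 T2 T3 : Fin n → Fin n → Fin n → Fin n → ℝ) :
    ∑ i, ∑ j, ∑ k, ∑ l, (a i * b k - a k * b i) * (a j * b l - a l * b j) *
      ((1/2) * T1 i j k l - (1/8) * T2 i j k l - (3/4) * T3 i j k l) =
    (1/2) * (E4 T1 a a b b - E4 T1 a b b a - E4 T1 b a a b + E4 T1 b b a a)
    - (1/8) * (E4 T2 a a b b - E4 T2 a b b a - E4 T2 b a a b + E4 T2 b b a a)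
    - (3/4) * (E4 T3 a a b b - E4 T3 a b b a - E4 T3 b a a b + E4 T3 b b a a) := by
  simp only [E4, Finset.mul_sum, ← Finset.sum_add_distrib, ← Finset.sum_sub_distrib]
  refine Finset.sum_congr rfl fun i _ => Finset.sum_congr rfl fun j _ =>
    Finset.sum_congr rfl fun k _ => Finset.sum_congr rfl fun l _ => ?_
  ring


theorem E4_sum {ι : Type*} [Fintype ι] (T : ι → Fin n → Fin n → Fin n → Fin n → ℝ)
    (a b c d : Fin n → ℝ) :
    E4 (fun i j k l => ∑ s, T s i j k l) a b c d = ∑ s, E4 (T s) a b c d := by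
  simp only [E4, Finset.mul_sum]
  rw [Finset.sum_comm (s := Finset.univ (α := ι))]
  refine Finset.sum_congr rfl fun i _ => ?_
  rw [Finset.sum_comm (s := Finset.univ (α := ι))]
  refine Finset.sum_congr rfl fun j _ => ?_
  rw [Finset.sum_comm (s := Finset.univ (α := ι))]
  refine Finset.sum_congr rfl fun k _ => ?_
  rw [Finset.sum_comm (s := Finset.univ (α := ι))]

theorem E4_mul (A B : Fin n → Fin n → ℝ) (e : ℝ) (a b c d : Fin n → ℝ) :
    E4 (fun i j k l => A i j * e * B k l) a b c d =
      (∑ i, ∑ j, a i * b j * A i j) * e * (∑ k, ∑ l, c k * d l * B k l) := by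
  simp only [E4]
  rw [Finset.sum_mul, Finset.sum_mul]
  refine Finset.sum_congr rfl fun i _ => ?_
  rw [Finset.sum_mul, Finset.sum_mul]
  refine Finset.sum_congr rfl fun j _ => ?_
  simp only [Finset.mul_sum]
  refine Finset.sum_congr rfl fun k _ => Finset.sum_congr rfl fun l _ => ?_
  ring

theorem E4_swap (T : Fin n → Fin n → Fin n → Fin n → ℝ) (a b c d : Fin n → ℝ) :
    E4 T a b c d = E4 (fun i k j l => T i j k l) a c b d := by
  simp only [E4]
  refine Finset.sum_congr rfl fun i _ => ?_
  rw [Finset.sum_comm]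
  refine Finset.sum_congr rfl fun j _ => ?_
  refine Finset.sum_congr rfl fun k _ => Finset.sum_congr rfl fun l _ => ?_
  ring

theorem dder_sharp (p : Fin n → ℝ) (f : Pt n → ℝ) (x : Pt n) :
    dder (sharp g (fun _ => p)) f x = ∑ i, p i * ∑ s, ginv g x i s * pd s f x := by
  unfold dder
  rw [fderiv_vec]
  simp only [sharp, Finset.mul_sum, Finset.sum_mul]
  rw [Finset.sum_comm]
  exact Finset.sum_congr rfl fun i _ => Finset.sum_congr rfl fun j _ => by ring

theorem pd_gF (hU : IsOpen U) (hg : IsRiemannOn U g) {x : Pt n} (hx : x ∈ U)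
    (a b : Fin n → ℝ) (t : Fin n) :
    pd t (gF g (fun _ => a) (fun _ => b)) x =
      ∑ k, ∑ l, a k * b l * pd t (fun y => ginv g y k l) x := by
  have d := fun i j => (sm_ginv hg i j).diff hU hx
  have e : gF g (fun _ => a) (fun _ => b) = fun y => ∑ k, ∑ l, (a k * b l) * ginv g y k l := by
    funext y
    exact Finset.sum_congr rfl fun i _ => Finset.sum_congr rfl fun j _ => by ring
  unfold pd
  rw [e, fderiv_sum' (fun i => DifferentiableAt.fun_sum fun j _ => (d i j).const_mul _)]
  refine Finset.sum_congr rfl fun i _ => ?_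
  rw [fderiv_sum' (fun j => (d i j).const_mul _)]
  refine Finset.sum_congr rfl fun j _ => ?_
  rw [fderiv_const_mul (d i j)]
  rfl

theorem E4_T1 (hU : IsOpen U) (hg : IsRiemannOn U g) {x : Pt n} (hx : x ∈ U)
    (a b c d : Fin n → ℝ) :
    E4 (fun i j k l => ∑ s, ginv g x i s *
        pd s (fun y => ∑ t, ginv g y j t * pd t (fun z => ginv g z k l) y) x) a b c d =
    dder (sharp g (fun _ => a)) (dder (sharp g (fun _ => b))
      (gF g (fun _ => c) (fun _ => d))) x := by
  let H : Fin n → Fin n → Fin n → Pt n → ℝ := fun j k l y =>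
    ∑ t, ginv g y j t * pd t (fun z => ginv g z k l) y
  have sH : ∀ j k l, Sm U (H j k l) := fun j k l =>
    Sm.sum fun t => (sm_ginv hg j t).mul ((sm_ginv hg k l).pd hU t)
  have dH := fun j k l => (sH j k l).diff hU hx
  have e := dder_congr hU hx (f := dder (sharp g (fun _ => b)) (gF g (fun _ => c) (fun _ => d)))
    (h := fun y => ∑ j, ∑ k, ∑ l, (b j * c k * d l) * H j k l y) (fun y hy => by
      rw [dder_sharp]
      refine Finset.sum_congr rfl fun j _ => ?_
      simp only [pd_gF hU hg hy, H, Finset.mul_sum]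
      rw [Finset.sum_comm]
      refine Finset.sum_congr rfl fun k _ => ?_
      rw [Finset.sum_comm]
      refine Finset.sum_congr rfl fun l _ => Finset.sum_congr rfl fun t _ => ?_
      ring) (sharp g (fun _ => a))
  rw [e, dder_sharp]
  have e2 : ∀ s, pd s (fun y => ∑ j, ∑ k, ∑ l, (b j * c k * d l) * H j k l y) x =
      ∑ j, ∑ k, ∑ l, (b j * c k * d l) * pd s (H j k l) x := by
    intro s
    unfold pd
    rw [fderiv_sum' (fun j => DifferentiableAt.fun_sum fun k _ =>
      DifferentiableAt.fun_sum fun l _ => (dH j k l).const_mul _)]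
    refine Finset.sum_congr rfl fun j _ => ?_
    rw [fderiv_sum' (fun k => DifferentiableAt.fun_sum fun l _ => (dH j k l).const_mul _)]
    refine Finset.sum_congr rfl fun k _ => ?_
    rw [fderiv_sum' (fun l => (dH j k l).const_mul _)]
    refine Finset.sum_congr rfl fun l _ => ?_
    rw [fderiv_const_mul (dH j k l)]
    rfl
  simp only [e2]
  change E4 (fun i j k l => ∑ s, ginv g x i s * pd s (H j k l) x) a b c d = _
  simp only [E4, Finset.mul_sum]
  refine Finset.sum_congr rfl fun i _ => ?_
  rw [Finset.sum_comm (s := Finset.univ (α := Fin n)) (f := fun s j => ∑ k, ∑ l,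
    a i * (ginv g x i s * (b j * c k * d l * pd s (H j k l) x)))]
  refine Finset.sum_congr rfl fun j _ => ?_
  rw [Finset.sum_comm (s := Finset.univ (α := Fin n)) (f := fun s k => ∑ l,
    a i * (ginv g x i s * (b j * c k * d l * pd s (H j k l) x)))]
  refine Finset.sum_congr rfl fun k _ => ?_
  rw [Finset.sum_comm (s := Finset.univ (α := Fin n)) (f := fun s l =>
    a i * (ginv g x i s * (b j * c k * d l * pd s (H j k l) x)))]
  refine Finset.sum_congr rfl fun l _ => Finset.sum_congr rfl fun s _ => ?_
  ring

theorem E4_T2 (hU : IsOpen U) (hg : IsRiemannOn U g) {x : Pt n} (hx : x ∈ U)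
    (a b c d : Fin n → ℝ) :
    E4 (fun i j k l => ∑ s, ∑ t, pd s (fun y => ginv g y i j) x * ginv g x s t *
                pd t (fun y => ginv g y k l) x) a b c d =
    bf g x (gd g (gF g (fun _ => a) (fun _ => b)) x) (gd g (gF g (fun _ => c) (fun _ => d)) x) := by
  rw [bf_gd hg hx, fderiv_vec, E4_sum]
  refine Finset.sum_congr rfl fun s _ => ?_
  rw [E4_sum]
  simp only [E4_mul, ← pd_gF hU hg hx, gd, rs, Finset.sum_mul]
  refine Finset.sum_congr rfl fun t _ => ?_
  rw [ginv_symm hg hx s t]; ring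

/-- directional derivative of `c♯` along `a♯` -/
def Wd (g : Met n) (x : Pt n) (a c : Fin n → ℝ) : Fin n → ℝ := fun p =>
  fderiv ℝ (fun y => sharp g (fun _ => c) y p) x (sharp g (fun _ => a) x)

theorem Wd_eq (hU : IsOpen U) (hg : IsRiemannOn U g) {x : Pt n} (hx : x ∈ U)
    (a c : Fin n → ℝ) (p : Fin n) :
    Wd g x a c p = ∑ i, ∑ k, a i * c k * ∑ s, ginv g x i s * pd s (fun y => ginv g y k p) x := by
  have d := fun i j => (sm_ginv hg i j).diff hU hx
  have e : ∀ s, pd s (fun y => sharp g (fun _ => c) y p) x =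
      ∑ k, c k * pd s (fun y => ginv g y k p) x := by
    intro s
    unfold pd sharp
    rw [fderiv_sum' (fun k => (d k p).mul_const _)]
    refine Finset.sum_congr rfl fun k _ => ?_
    rw [fderiv_mul_const (d k p)]
    rfl
  have := dder_sharp (g := g) a (fun y => sharp g (fun _ => c) y p) x
  change Wd g x a c p = _ at this
  rw [this]
  simp only [e, Finset.mul_sum]
  refine Finset.sum_congr rfl fun i _ => ?_
  rw [Finset.sum_comm]
  refine Finset.sum_congr rfl fun k _ => Finset.sum_congr rfl fun s _ => ?_
  ring

theorem E4_T3 (hU : IsOpen U) (hg : IsRiemannOn U g) {x : Pt n} (hx : x ∈ U)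
    (a b c d : Fin n → ℝ) :
    E4 (fun i j k l => ∑ s, ∑ t, ∑ p, ∑ q, ginv g x i s * pd s (fun y => ginv g y k p) x *
                g x p q * ginv g x j t * pd t (fun y => ginv g y l q) x) a b c d =
    bf g x (Wd g x a c) (Wd g x b d) := by
  have e : (fun i j k l => ∑ s, ∑ t, ∑ p, ∑ q, ginv g x i s * pd s (fun y => ginv g y k p) x *
        g x p q * ginv g x j t * pd t (fun y => ginv g y l q) x) =
      fun i j k l => ∑ p, ∑ q, (∑ s, ginv g x i s * pd s (fun y => ginv g y k p) x) * g x p q *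
        (∑ t, ginv g x j t * pd t (fun y => ginv g y l q) x) := by
    funext i j k l
    trans ∑ s, ∑ p, ∑ q, ∑ t, ginv g x i s * pd s (fun y => ginv g y k p) x *
        g x p q * ginv g x j t * pd t (fun y => ginv g y l q) x
    · refine Finset.sum_congr rfl fun s _ => ?_
      rw [Finset.sum_comm]
      refine Finset.sum_congr rfl fun p _ => ?_
      rw [Finset.sum_comm]
    rw [Finset.sum_comm]
    refine Finset.sum_congr rfl fun p _ => ?_
    rw [Finset.sum_comm]
    refine Finset.sum_congr rfl fun q _ => ?_
    simp only [Finset.mul_sum, Finset.sum_mul]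
    rw [Finset.sum_comm]
    refine Finset.sum_congr rfl fun s _ => Finset.sum_congr rfl fun t _ => ?_
    ring
  rw [e, E4_swap, E4_sum]
  unfold bf
  refine Finset.sum_congr rfl fun p _ => ?_
  rw [E4_sum]
  refine Finset.sum_congr rfl fun q _ => ?_
  rw [E4_mul, ← Wd_eq hU hg hx, ← Wd_eq hU hg hx]
  ring

end RGaux


/-- **Mario's formula in coordinates**: for 1-forms `α = aᵢ dxⁱ`, `β = bᵢ dxⁱ` with
constant coefficients on an open set `U ⊆ ℝⁿ` with a smooth Riemannian metric `g`,
the numerator of sectional curvature is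
`(aᵢb_k − a_kbᵢ)(a_jb_l − a_lb_j)(R₁^{ijkl} + R₂^{ijkl} + R₃^{ijkl})`. -/
theorem mario_formula_coordinates {n : ℕ} (U : Set (Pt n)) (hU : IsOpen U)
    (g : Met n) (hg : IsRiemannOn U g) (a b : Fin n → ℝ) :
    ∀ x ∈ U,
      gV g (Rcurv g (sharp g (fun _ => a)) (sharp g (fun _ => b)) (sharp g (fun _ => b)))
          (sharp g (fun _ => a)) x =
        ∑ i, ∑ j, ∑ k, ∑ l,
          (a i * b k - a k * b i) * (a j * b l - a l * b j) *
          ( (1/2) * (∑ s, ginv g x i s *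
                pd s (fun y => ∑ t, ginv g y j t * pd t (fun z => ginv g z k l) y) x)
            - (1/8) * (∑ s, ∑ t, pd s (fun y => ginv g y i j) x * ginv g x s t *
                pd t (fun y => ginv g y k l) x)
            - (3/4) * (∑ s, ∑ t, ∑ p, ∑ q, ginv g x i s * pd s (fun y => ginv g y k p) x *
                g x p q * ginv g x j t * pd t (fun y => ginv g y l q) x) ) := by
  intro x hx
  rw [RGaux.lhs_eq hU hg hx a b _ _ rfl rfl _ _ _ rfl rfl rfl]
  refine Eq.trans ?_ (RGaux.contr a b
    (fun i j k l => ∑ s, ginv g x i s *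
        pd s (fun y => ∑ t, ginv g y j t * pd t (fun z => ginv g z k l) y) x)
    (fun i j k l => ∑ s, ∑ t, pd s (fun y => ginv g y i j) x * ginv g x s t *
                pd t (fun y => ginv g y k l) x)
    (fun i j k l => ∑ s, ∑ t, ∑ p, ∑ q, ginv g x i s * pd s (fun y => ginv g y k p) x *
                g x p q * ginv g x j t * pd t (fun y => ginv g y l q) x)).symm
  have hb : bracket (sharp g (fun _ => a)) (sharp g (fun _ => b)) x =
      RGaux.Wd g x a b - RGaux.Wd g x b a := rfl
  have hs : ∀ y ∈ U, gF g (fun _ => b) (fun _ => a) y = gF g (fun _ => a) (fun _ => b) y :=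
    fun y hy => RGaux.gF_symm hg hy b a
  have h1 : dder (sharp g (fun _ => a)) (dder (sharp g (fun _ => b))
      (gF g (fun _ => b) (fun _ => a))) x = dder (sharp g (fun _ => a)) (dder (sharp g (fun _ => b))
      (gF g (fun _ => a) (fun _ => b))) x :=
    RGaux.dder_congr hU hx (fun y hy => RGaux.dder_congr hU hy hs _) _
  have h2 : RGaux.gd g (gF g (fun _ => b) (fun _ => a)) x =
      RGaux.gd g (gF g (fun _ => a) (fun _ => b)) x := by
    refine RGaux.bf_nondeg hg hx fun w => ?_
    rw [RGaux.bf_gd hg hx, RGaux.bf_gd hg hx]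
    exact RGaux.dder_congr hU hx hs (fun _ => w)
  simp only [RGaux.E4_T1 hU hg hx, RGaux.E4_T2 hU hg hx, RGaux.E4_T3 hU hg hx, hb, h1, h2,
    RGaux.bf_sub_left, RGaux.bf_sub_right]
  rw [RGaux.bf_symm hg hx (RGaux.gd g (gF g (fun _ => b) (fun _ => b)) x)]
  ring
end
end

section
/- Fix x ∈ M, let α, β be closed smooth 1-forms on M, and suppose X_α, X_β are smooth vector fields defined near x satisfying: (1) X_α(x) = α♯(x) and X_β(x) = β♯(x); (2) (so that D_x(α♯ − X_α) and D_x(β♯ − X_β) are well-defined elements of Hom(T_xM, T_xM), with D_x(α♯ − X_α).Y_x = [Y, α♯ − X_α](x) for any vector field Y); (3) L_{X_α}α = L_{X_α}β = L_{X_β}α = L_{X_β}β = 0; and (4) [X_α, X_β] = 0. Define the force F(α,β) := (1/2) d(g⁻¹(α,β)) and the stress D(α,β)(x) := D_x(β♯ − X_β).α♯(x). Then g(R(α♯,β♯)β♯,α♯)(x) = R₁₁ + R₁₂ + R₂ + R₃, where R₁₁ = (1/2)( L_{X_α}² (g⁻¹)(β,β) − 2 L_{X_α}L_{X_β}(g⁻¹)(α,β)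 + L_{X_β}²(g⁻¹)(α,α) )(x), R₁₂ = ⟨F(α,α), D(β,β)⟩ + ⟨F(β,β), D(α,α)⟩ − ⟨F(α,β), D(α,β) + D(β,α)⟩, R₂ = ( ‖F(α,β)‖²_{g⁻¹} − ⟨F(α,α), F(β,β)⟩_{g⁻¹} )(x), and R₃ = −(3/4) ‖D(α,β) − D(β,α)‖²_{g_x}. -/
/-!
Local-coordinate (chart) model of a Riemannian manifold: points are elements
of `ℝⁿ`, vector fields and 1-forms are given by their component functions on
an open set `U`, and the metric by its matrix of components.
-/

noncomputable section

open RG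

namespace RG

variable {n : ℕ}

/-- The *force*: `F(α,β) := (1/2) d(g⁻¹(α,β))`, a 1-form. -/
def force (g : Met n) (α β : OneForm n) : OneForm n :=
  fun x i => (1/2) * dF (gF g α β) x i

/-- The *stress*: `D(α,β)(x) := D_x(β♯ − X_β).α♯(x)`, a tangent vector at `x`,
where `Xb` plays the role of `X_β` (a locally constant extension of `β♯(x)`),
so that `β♯ − X_β` vanishes at `x` and its derivative `D_x` there is
chart-independent; in the chart it is the ordinary derivative `fderiv`. -/
def stress (g : Met n) (α β : OneForm n) (Xb : VF n) (x : Pt n) : Fin n → ℝ :=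
  fderiv ℝ (fun y => (sharp g β y - Xb y : Fin n → ℝ)) x (sharp g α x)

end RG

namespace RG

variable {n : ℕ}

theorem smooth_dder {U : Set (Pt n)} (hU : IsOpen U) {X : VF n} {f : Pt n → ℝ}
    (hX : SmoothSec U X) (hf : ContDiffOn ℝ (⊤ : ℕ∞) f U) :
    ContDiffOn ℝ (⊤ : ℕ∞) (dder X f) U := by
  have h1 : ContDiffOn ℝ (⊤ : ℕ∞) (fderiv ℝ f) U :=
    hf.fderiv_of_isOpen hU (by simp)
  exact h1.clm_apply (contDiffOn_pi.2 hX)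

theorem smooth_pd {U : Set (Pt n)} (hU : IsOpen U) {f : Pt n → ℝ} (s : Fin n)
    (hf : ContDiffOn ℝ (⊤ : ℕ∞) f U) : ContDiffOn ℝ (⊤ : ℕ∞) (pd s f) U := by
  have h1 : ContDiffOn ℝ (⊤ : ℕ∞) (fderiv ℝ f) U :=
    hf.fderiv_of_isOpen hU (by simp)
  exact h1.clm_apply contDiffOn_const

theorem smooth_det {U : Set (Pt n)} {g : Met n} (hg : SmoothMet U g) :
    ContDiffOn ℝ (⊤ : ℕ∞) (fun y => (g y).det) U := by
  simp only [Matrix.det_apply]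
  refine ContDiffOn.sum fun σ _ => ?_
  refine ContDiffOn.const_smul _ ?_
  exact contDiffOn_prod fun i _ => hg _ _

theorem smooth_ginv {U : Set (Pt n)} {g : Met n} (hg : IsRiemannOn U g) :
    SmoothMet U (ginv g) := by
  intro i j
  have : (fun y => ginv g y i j) = fun y => (g y).det⁻¹ * (g y).adjugate i j := by
    funext y
    simp [ginv, Matrix.inv_def, Ring.inverse_eq_inv']
  rw [this]
  refine ContDiffOn.mul ?_ ?_
  · exact (smooth_det hg.1).inv fun y hy => ((hg.2 y hy).2.det_pos).ne'
  · simp only [Matrix.adjugate_apply]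
    refine smooth_det (g := fun y => (g y).updateRow j (Pi.single i 1)) ?_
    intro a b
    by_cases h : a = j
    · subst h; simp only [Matrix.updateRow_self]; exact contDiffOn_const
    · simp only [Matrix.updateRow_ne h]; exact hg.1 a b

theorem smooth_sharp {U : Set (Pt n)} {g : Met n} (hg : IsRiemannOn U g) {α : OneForm n}
    (hα : SmoothSec U α) : SmoothSec U (sharp g α) := by
  intro k
  exact ContDiffOn.sum fun i _ => (smooth_ginv hg i k).mul (hα i)

theorem smooth_ev {U : Set (Pt n)} {G : Met n} (hG : SmoothMet U G) {α β : OneForm n}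
    (hα : SmoothSec U α) (hβ : SmoothSec U β) : ContDiffOn ℝ (⊤ : ℕ∞) (evCo G α β) U :=
  ContDiffOn.sum fun i _ => ContDiffOn.sum fun j _ => ((hG i j).mul (hα i)).mul (hβ j)

theorem smooth_chr {U : Set (Pt n)} (hU : IsOpen U) {g : Met n} (hg : IsRiemannOn U g)
    (k i j : Fin n) : ContDiffOn ℝ (⊤ : ℕ∞) (chr g k i j) U := by
  refine contDiffOn_const.mul (ContDiffOn.sum fun l _ => (smooth_ginv hg k l).mul ?_)
  exact ((smooth_pd hU i (hg.1 j l)).add (smooth_pd hU j (hg.1 i l))).sub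
    (smooth_pd hU l (hg.1 i j))

theorem smooth_cov {U : Set (Pt n)} (hU : IsOpen U) {g : Met n} (hg : IsRiemannOn U g)
    {X Y : VF n} (hX : SmoothSec U X) (hY : SmoothSec U Y) : SmoothSec U (covV g X Y) := by
  intro k
  refine (smooth_dder hU hX (hY k)).add ?_
  exact ContDiffOn.sum fun i _ => ContDiffOn.sum fun j _ =>
    ((smooth_chr hU hg k i j).mul (hX i)).mul (hY j)

theorem smooth_lieCo {U : Set (Pt n)} (hU : IsOpen U) {X : VF n} (hX : SmoothSec U X)
    {G : Met n} (hG : SmoothMet U G) : SmoothMet U (lieCo X G) := by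
  intro i j
  refine ((smooth_dder hU hX (hG i j)).sub ?_).sub ?_
  · exact ContDiffOn.sum fun s _ => (hG s j).mul (smooth_pd hU s (hX i))
  · exact ContDiffOn.sum fun s _ => (hG i s).mul (smooth_pd hU s (hX j))

theorem diffAt {U : Set (Pt n)} (hU : IsOpen U) {f : Pt n → ℝ}
    (hf : ContDiffOn ℝ (⊤ : ℕ∞) f U) {y : Pt n} (hy : y ∈ U) : DifferentiableAt ℝ f y :=
  (hf.contDiffAt (hU.mem_nhds hy)).differentiableAt (by simp)

theorem diffAtV {U : Set (Pt n)} (hU : IsOpen U) {X : VF n}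
    (hX : SmoothSec U X) {y : Pt n} (hy : y ∈ U) : DifferentiableAt ℝ X y :=
  differentiableAt_pi.2 fun i => diffAt hU (hX i) hy

theorem fderiv_pd (f : Pt n → ℝ) (y v : Pt n) : fderiv ℝ f y v = ∑ s, v s * pd s f y := by
  conv_lhs => rw [pi_eq_sum_univ' v]
  simp [map_sum, pd]

/-- Derivative of a contraction. -/
theorem fderiv_ev {G : Met n} {X Y : VF n} {y : Pt n}
    (hG : ∀ i j, DifferentiableAt ℝ (fun z => G z i j) y)
    (hX : ∀ i, DifferentiableAt ℝ (fun z => X z i) y)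
    (hY : ∀ i, DifferentiableAt ℝ (fun z => Y z i) y) (v : Pt n) :
    fderiv ℝ (evCo G X Y) y v = ∑ i, ∑ j,
      (fderiv ℝ (fun z => G z i j) y v * X y i * Y y j
        + G y i j * fderiv ℝ (fun z => X z i) y v * Y y j
        + G y i j * X y i * fderiv ℝ (fun z => Y z j) y v) := by
  have h : HasFDerivAt (evCo G X Y) (∑ i, ∑ j,
      ((G y i j * X y i) • fderiv ℝ (fun z => Y z j) y +
        Y y j • (G y i j • fderiv ℝ (fun z => X z i) y
          + X y i • fderiv ℝ (fun z => G z i j) y))) y := by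
    refine HasFDerivAt.fun_sum fun i _ => HasFDerivAt.fun_sum fun j _ => ?_
    exact ((hG i j).hasFDerivAt.mul (hX i).hasFDerivAt).mul (hY j).hasFDerivAt
  rw [h.fderiv]
  simp only [_root_.sum_apply, _root_.add_apply,
    _root_.smul_apply, smul_eq_mul]
  refine Finset.sum_congr rfl fun i _ => Finset.sum_congr rfl fun j _ => ?_
  ring

theorem ev_lie {U : Set (Pt n)} (hU : IsOpen U) {X : VF n} {G : Met n} {α β : OneForm n}
    (hG : SmoothMet U G) (hα : SmoothSec U α) (hβ : SmoothSec U β)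
    {y : Pt n} (hy : y ∈ U) (ha : lieF X α y = 0) (hb : lieF X β y = 0) :
    evCo (lieCo X G) α β y = dder X (evCo G α β) y := by
  unfold dder
  rw [fderiv_ev (fun i j => diffAt hU (hG i j) hy) (fun i => diffAt hU (hα i) hy)
    (fun i => diffAt hU (hβ i) hy)]
  have ha' : ∀ i, fderiv ℝ (fun z => α z i) y (X y) = - ∑ s, α y s * pd i (fun z => X z s) y :=
    fun i => eq_neg_of_add_eq_zero_left (congrFun ha i)
  have hb' : ∀ i, fderiv ℝ (fun z => β z i) y (X y) = - ∑ s, β y s * pd i (fun z => X z s) y :=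
    fun i => eq_neg_of_add_eq_zero_left (congrFun hb i)
  simp only [ha', hb', evCo, lieCo, Matrix.of_apply, sub_mul, Finset.sum_add_distrib,
    Finset.sum_sub_distrib, Finset.mul_sum, Finset.sum_mul, mul_neg, neg_mul,
    Finset.sum_neg_distrib]
  have e1 : ∑ i, ∑ j, ∑ s, G y s j * pd s (fun z => X z i) y * α y i * β y j
      = ∑ i, ∑ j, ∑ s, G y i j * (α y s * pd i (fun z => X z s) y) * β y j := by
    rw [Finset.sum_comm]
    conv_rhs => rw [Finset.sum_comm]
    refine Finset.sum_congr rfl fun j _ => ?_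
    rw [Finset.sum_comm]
    refine Finset.sum_congr rfl fun i _ => Finset.sum_congr rfl fun s _ => ?_
    ring
  have e2 : ∑ i, ∑ j, ∑ s, G y i s * pd s (fun z => X z j) y * α y i * β y j
      = ∑ i, ∑ j, ∑ s, G y i j * α y i * (β y s * pd j (fun z => X z s) y) := by
    refine Finset.sum_congr rfl fun j _ => ?_
    rw [Finset.sum_comm]
    refine Finset.sum_congr rfl fun i _ => Finset.sum_congr rfl fun s _ => ?_
    ring
  rw [e1, e2]
  ring

theorem ev_lie_lie {U : Set (Pt n)} (hU : IsOpen U) {X Y : VF n} {G : Met n} {α β : OneForm n}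
    (hG : SmoothMet U G) (hY : SmoothSec U Y) (hα : SmoothSec U α)
    (hβ : SmoothSec U β)
    (ha : ∀ y ∈ U, lieF X α y = 0) (hb : ∀ y ∈ U, lieF X β y = 0)
    (ha' : ∀ y ∈ U, lieF Y α y = 0) (hb' : ∀ y ∈ U, lieF Y β y = 0)
    {y : Pt n} (hy : y ∈ U) :
    evCo (lieCo X (lieCo Y G)) α β y = dder X (dder Y (evCo G α β)) y := by
  rw [ev_lie hU (smooth_lieCo hU hY hG) hα hβ hy (ha y hy) (hb y hy)]
  have : evCo (lieCo Y G) α β =ᶠ[nhds y] dder Y (evCo G α β) := by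
    filter_upwards [hU.mem_nhds hy] with z hz
    exact ev_lie hU hG hα hβ hz (ha' z hz) (hb' z hz)
  unfold dder at *
  rw [this.fderiv_eq]

/-! ### Second derivatives -/

theorem dder_dder {U : Set (Pt n)} (hU : IsOpen U) {X Y : VF n} {f : Pt n → ℝ}
    (hf : ContDiffOn ℝ (⊤ : ℕ∞) f U) (hY : SmoothSec U Y) {y : Pt n} (hy : y ∈ U) :
    dder X (dder Y f) y = fderiv ℝ (fderiv ℝ f) y (X y) (Y y)
      + fderiv ℝ f y (fderiv ℝ Y y (X y)) := by
  have h1 : DifferentiableAt ℝ (fderiv ℝ f) y :=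
    ((hf.fderiv_of_isOpen hU (m := (⊤ : ℕ∞)) (by simp)).contDiffAt
      (hU.mem_nhds hy)).differentiableAt (by simp)
  unfold dder
  rw [fderiv_clm_apply h1 (diffAtV hU hY hy)]
  simp [add_comm]

theorem snd_symm {U : Set (Pt n)} (hU : IsOpen U) {f : Pt n → ℝ}
    (hf : ContDiffOn ℝ (⊤ : ℕ∞) f U) {y : Pt n} (hy : y ∈ U) (v w : Pt n) :
    fderiv ℝ (fderiv ℝ f) y v w = fderiv ℝ (fderiv ℝ f) y w v :=
  ((hf.contDiffAt (hU.mem_nhds hy)).isSymmSndFDerivAt (by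
    rw [minSmoothness_of_isRCLikeNormedField]
    exact WithTop.coe_le_coe.2 (le_top : (2 : ℕ∞) ≤ ⊤))) v w

theorem bracket_eq {U : Set (Pt n)} (hU : IsOpen U) {X Y : VF n}
    (hX : SmoothSec U X) (hY : SmoothSec U Y) {y : Pt n} (hy : y ∈ U) :
    bracket X Y y = fderiv ℝ Y y (X y) - fderiv ℝ X y (Y y) := by
  funext k
  simp only [bracket, Pi.sub_apply]
  rw [fderiv_apply (diffAtV hU hX hy), fderiv_apply (diffAtV hU hY hy)]
  rfl

/-! ### Algebra at a point -/

/-- The bilinear form of a matrix. -/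
def bil (G : Matrix (Fin n) (Fin n) ℝ) (u v : Fin n → ℝ) : ℝ := ∑ i, ∑ j, G i j * u i * v j

theorem bil_add_left (G : Matrix (Fin n) (Fin n) ℝ) (u u' v : Fin n → ℝ) :
    bil G (u + u') v = bil G u v + bil G u' v := by
  simp only [bil, Pi.add_apply, mul_add, add_mul, Finset.sum_add_distrib]
theorem bil_add_right (G : Matrix (Fin n) (Fin n) ℝ) (u v v' : Fin n → ℝ) :
    bil G u (v + v') = bil G u v + bil G u v' := by
  simp only [bil, Pi.add_apply, mul_add, Finset.sum_add_distrib]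
theorem bil_sub_left (G : Matrix (Fin n) (Fin n) ℝ) (u u' v : Fin n → ℝ) :
    bil G (u - u') v = bil G u v - bil G u' v := by
  simp only [bil, Pi.sub_apply, mul_sub, sub_mul, Finset.sum_sub_distrib]
theorem bil_sub_right (G : Matrix (Fin n) (Fin n) ℝ) (u v v' : Fin n → ℝ) :
    bil G u (v - v') = bil G u v - bil G u v' := by
  simp only [bil, Pi.sub_apply, mul_sub, Finset.sum_sub_distrib]
theorem bil_smul_left (G : Matrix (Fin n) (Fin n) ℝ) (c : ℝ) (u v : Fin n → ℝ) :
    bil G (c • u) v = c * bil G u v := by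
  simp only [bil, Pi.smul_apply, smul_eq_mul, Finset.mul_sum]
  exact Finset.sum_congr rfl fun i _ => Finset.sum_congr rfl fun j _ => by ring
theorem bil_smul_right (G : Matrix (Fin n) (Fin n) ℝ) (c : ℝ) (u v : Fin n → ℝ) :
    bil G u (c • v) = c * bil G u v := by
  simp only [bil, Pi.smul_apply, smul_eq_mul, Finset.mul_sum]
  exact Finset.sum_congr rfl fun i _ => Finset.sum_congr rfl fun j _ => by ring
theorem bil_symm {G : Matrix (Fin n) (Fin n) ℝ} (h : G.IsSymm) (u v : Fin n → ℝ) :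
    bil G u v = bil G v u := by
  unfold bil
  rw [Finset.sum_comm]
  refine Finset.sum_congr rfl fun i _ => Finset.sum_congr rfl fun j _ => ?_
  rw [h.apply i j]; ring

theorem bil_eq (G : Matrix (Fin n) (Fin n) ℝ) (u v : Fin n → ℝ) :
    bil G u v = ∑ j, (G.transpose.mulVec u) j * v j := by
  simp only [bil, Matrix.mulVec, dotProduct, Matrix.transpose_apply, Finset.sum_mul]
  rw [Finset.sum_comm]

/-- cometric of lowered vectors -/
theorem bil_inv {G : Matrix (Fin n) (Fin n) ℝ} (h : G.IsSymm) (hd : IsUnit G.det)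
    (u v : Fin n → ℝ) :
    bil G⁻¹ (G.mulVec u) (G.mulVec v) = bil G u v := by
  rw [bil_eq, bil_symm h, bil_eq, Matrix.transpose_nonsing_inv, h.eq, Matrix.mulVec_mulVec,
    Matrix.nonsing_inv_mul _ hd, Matrix.one_mulVec]
  exact Finset.sum_congr rfl fun i _ => mul_comm _ _

theorem bil_sharp {G : Matrix (Fin n) (Fin n) ℝ} (h : G.IsSymm) (hd : IsUnit G.det)
    (a v : Fin n → ℝ) :
    bil G (fun k => ∑ i, G⁻¹ i k * a i) v = ∑ i, a i * v i := by
  have e : (fun k => ∑ i, G⁻¹ i k * a i) = G⁻¹.mulVec a := by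
    funext k
    have hs : (G⁻¹).IsSymm := by
      rw [Matrix.IsSymm, Matrix.transpose_nonsing_inv, h.eq]
    simp only [Matrix.mulVec, dotProduct]
    exact Finset.sum_congr rfl fun i _ => by rw [hs.apply k i]
  rw [e, bil_eq, h.eq, Matrix.mulVec_mulVec, Matrix.mul_nonsing_inv _ hd, Matrix.one_mulVec]

end RG

namespace RG

variable {n : ℕ}

/-! ### Levi-Civita connection -/

theorem det_unit {U : Set (Pt n)} {g : Met n} (hg : IsRiemannOn U g) {y : Pt n} (hy : y ∈ U) :
    IsUnit (g y).det := ((hg.2 y hy).2.det_pos).ne'.isUnit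

theorem pd_symm {U : Set (Pt n)} (hU : IsOpen U) {g : Met n} (hg : IsRiemannOn U g)
    {y : Pt n} (hy : y ∈ U) (s i j : Fin n) :
    pd s (fun z => g z i j) y = pd s (fun z => g z j i) y := by
  have : (fun z => g z i j) =ᶠ[nhds y] (fun z => g z j i) := by
    filter_upwards [hU.mem_nhds hy] with z hz
    exact (hg.2 z hz).1.apply j i
  unfold pd
  rw [this.fderiv_eq]

theorem chr_symm {U : Set (Pt n)} (hU : IsOpen U) {g : Met n} (hg : IsRiemannOn U g)
    {y : Pt n} (hy : y ∈ U) (k i j : Fin n) : chr g k i j y = chr g k j i y := by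
  unfold chr
  congr 1
  refine Finset.sum_congr rfl fun l _ => ?_
  rw [pd_symm hU hg hy l i j]
  ring

theorem chr_lower {U : Set (Pt n)} {g : Met n} (hg : IsRiemannOn U g)
    {y : Pt n} (hy : y ∈ U) (m i j : Fin n) :
    ∑ k, g y k m * chr g k i j y = (1/2) * (pd i (fun z => g z j m) y
      + pd j (fun z => g z i m) y - pd m (fun z => g z i j) y) := by
  set c : Fin n → ℝ := fun l => pd i (fun z => g z j l) y
      + pd j (fun z => g z i l) y - pd l (fun z => g z i j) y with hc
  have h : (g y).mulVec ((g y)⁻¹.mulVec c) = c := by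
    rw [Matrix.mulVec_mulVec, Matrix.mul_nonsing_inv _ (det_unit hg hy), Matrix.one_mulVec]
  have h' := congrFun h m
  simp only [Matrix.mulVec, dotProduct] at h'
  change _ = (1/2) * c m
  rw [← h', Finset.mul_sum]
  refine Finset.sum_congr rfl fun k _ => ?_
  rw [(hg.2 y hy).1.apply m k]
  simp only [chr, ginv, hc]
  ring

/-- The Christoffel part of the covariant derivative. -/
def gam (g : Met n) (y u v : Pt n) : Fin n → ℝ := fun k => ∑ i, ∑ j, chr g k i j y * u i * v j

theorem bil_gam {U : Set (Pt n)} {g : Met n} (hg : IsRiemannOn U g)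
    {y : Pt n} (hy : y ∈ U) (u v w : Pt n) :
    bil (g y) (gam g y u v) w = ∑ m, ∑ i, ∑ j, (1/2) * (pd i (fun z => g z j m) y
      + pd j (fun z => g z i m) y - pd m (fun z => g z i j) y) * u i * v j * w m := by
  unfold bil gam
  rw [Finset.sum_comm]
  refine Finset.sum_congr rfl fun m _ => ?_
  simp only [← chr_lower hg hy, Finset.mul_sum, Finset.sum_mul]
  rw [Finset.sum_comm]
  refine Finset.sum_congr rfl fun i _ => ?_
  rw [Finset.sum_comm]
  refine Finset.sum_congr rfl fun j _ => Finset.sum_congr rfl fun k _ => ?_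
  ring

theorem gam_compat {U : Set (Pt n)} (hU : IsOpen U) {g : Met n} (hg : IsRiemannOn U g)
    {y : Pt n} (hy : y ∈ U) (u v w : Pt n) :
    ∑ i, ∑ j, fderiv ℝ (fun z => g z i j) y u * v i * w j
      = bil (g y) (gam g y u v) w + bil (g y) v (gam g y u w) := by
  rw [bil_symm (hg.2 y hy).1 v, bil_gam hg hy, bil_gam hg hy]
  have e : ∑ m, ∑ i, ∑ j, (1/2) * (pd i (fun z => g z j m) y
      + pd j (fun z => g z i m) y - pd m (fun z => g z i j) y) * u i * w j * v m
      = ∑ m, ∑ i, ∑ j, (1/2) * (pd i (fun z => g z m j) y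
      + pd m (fun z => g z i j) y - pd j (fun z => g z i m) y) * u i * w m * v j := by
    rw [Finset.sum_comm]
    conv_rhs => rw [Finset.sum_comm]
    refine Finset.sum_congr rfl fun i _ => ?_
    rw [Finset.sum_comm]
  rw [e, Finset.sum_comm, ← Finset.sum_add_distrib]
  refine Finset.sum_congr rfl fun m _ => ?_
  rw [← Finset.sum_add_distrib]
  simp only [← Finset.sum_add_distrib, fderiv_pd _ _ u, Finset.sum_mul]
  rw [Finset.sum_comm]
  refine Finset.sum_congr rfl fun i _ => Finset.sum_congr rfl fun j _ => ?_
  rw [pd_symm hU hg hy i m j]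
  ring

theorem gam_symm {U : Set (Pt n)} (hU : IsOpen U) {g : Met n} (hg : IsRiemannOn U g)
    {y : Pt n} (hy : y ∈ U) (u v : Pt n) : gam g y u v = gam g y v u := by
  funext k
  unfold gam
  rw [Finset.sum_comm]
  refine Finset.sum_congr rfl fun i _ => Finset.sum_congr rfl fun j _ => ?_
  rw [chr_symm hU hg hy]; ring

theorem cov_eq {U : Set (Pt n)} (hU : IsOpen U) {g : Met n} {X Y : VF n}
    (hY : SmoothSec U Y) {y : Pt n} (hy : y ∈ U) :
    covV g X Y y = fderiv ℝ Y y (X y) + gam g y (X y) (Y y) := by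
  funext k
  simp only [covV, gam, Pi.add_apply]
  rw [fderiv_apply (diffAtV hU hY hy)]
  rfl

theorem torsion {U : Set (Pt n)} (hU : IsOpen U) {g : Met n} (hg : IsRiemannOn U g) {X Y : VF n}
    (hX : SmoothSec U X) (hY : SmoothSec U Y) {y : Pt n} (hy : y ∈ U) :
    bracket X Y y = covV g X Y y - covV g Y X y := by
  rw [cov_eq hU hY hy, cov_eq hU hX hy, bracket_eq hU hX hY hy, gam_symm hU hg hy (X y)]
  abel

theorem compat {U : Set (Pt n)} (hU : IsOpen U) {g : Met n} (hg : IsRiemannOn U g)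
    {Z X Y : VF n}
    (hX : SmoothSec U X) (hY : SmoothSec U Y) {y : Pt n} (hy : y ∈ U) :
    dder Z (gV g X Y) y = bil (g y) (covV g Z X y) (Y y) + bil (g y) (X y) (covV g Z Y y) := by
  rw [cov_eq hU hY hy, cov_eq hU hX hy, bil_add_left, bil_add_right]
  have := fderiv_ev (fun i j => diffAt hU (hg.1 i j) hy) (fun i => diffAt hU (hX i) hy)
    (fun i => diffAt hU (hY i) hy) (Z y)
  change fderiv ℝ (evCo g X Y) y (Z y) = _
  rw [this]
  simp only [Finset.sum_add_distrib]
  rw [gam_compat hU hg hy]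
  unfold bil
  simp only [fderiv_apply (diffAtV hU hX hy), fderiv_apply (diffAtV hU hY hy)]
  simp only [ContinuousLinearMap.comp_apply, ContinuousLinearMap.proj_apply]
  ring

theorem gV_sharp {U : Set (Pt n)} {g : Met n} (hg : IsRiemannOn U g)
    {α : OneForm n} {y : Pt n} (hy : y ∈ U) (v : Pt n) :
    bil (g y) (sharp g α y) v = ∑ i, α y i * v i :=
  bil_sharp (hg.2 y hy).1 (det_unit hg hy) _ _

theorem gF_eq {U : Set (Pt n)} {g : Met n} (hg : IsRiemannOn U g)
    {α β : OneForm n} {y : Pt n} (hy : y ∈ U) :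
    gF g α β y = gV g (sharp g α) (sharp g β) y := by
  change _ = bil (g y) _ _
  rw [gV_sharp hg hy]
  simp only [gF, sharp, Finset.mul_sum]
  rw [Finset.sum_comm]
  conv_lhs => rw [Finset.sum_comm]
  refine Finset.sum_congr rfl fun i _ => Finset.sum_congr rfl fun j _ => ?_
  have hs : (ginv g y).IsSymm := by
    rw [Matrix.IsSymm, ginv, Matrix.transpose_nonsing_inv, (hg.2 y hy).1.eq]
  rw [hs.apply]; ring

theorem closed_symm_const {U : Set (Pt n)} (hU : IsOpen U) {g : Met n} (hg : IsRiemannOn U g)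
    {α : OneForm n} (hα : SmoothSec U α) (hc : IsClosedOn U α) {y : Pt n} (hy : y ∈ U)
    (u v : Pt n) :
    bil (g y) (covV g (fun _ => u) (sharp g α) y) v
      = bil (g y) (covV g (fun _ => v) (sharp g α) y) u := by
  have hA := smooth_sharp hg hα
  have hconst : ∀ w : Pt n, SmoothSec U (fun _ => w) := fun w i => contDiffOn_const
  have h1 := compat hU hg (Z := fun _ => u) hA (hconst v) hy
  have h2 := compat hU hg (Z := fun _ => v) hA (hconst u) hy
  have ht := torsion hU hg (hconst u) (hconst v) hy
  have hb : bracket (fun _ : Pt n => u) (fun _ => v) y = 0 := by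
    funext k; simp [bracket]
  rw [hb] at ht
  have ht' := sub_eq_zero.1 ht.symm
  rw [ht'] at h1
  have key : ∀ w w' : Pt n, dder (fun _ => w) (gV g (sharp g α) (fun _ => w')) y
      = ∑ i, ∑ j, w i * w' j * pd i (fun z => α z j) y := by
    intro w w'
    have e : gV g (sharp g α) (fun _ => w') =ᶠ[nhds y] fun z => ∑ j, α z j * w' j := by
      filter_upwards [hU.mem_nhds hy] with z hz
      exact gV_sharp hg hz w'
    unfold dder
    rw [e.fderiv_eq, fderiv_fun_sum (fun j _ => (diffAt hU (hα j) hy).mul_const _)]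
    simp only [_root_.sum_apply]
    rw [Finset.sum_comm]
    refine Finset.sum_congr rfl fun j _ => ?_
    rw [fderiv_mul_const (diffAt hU (hα j) hy)]
    simp only [_root_.smul_apply, smul_eq_mul]
    rw [fderiv_pd, Finset.mul_sum]
    refine Finset.sum_congr rfl fun i _ => ?_
    ring
  have k2 : dder (fun _ => u) (gV g (sharp g α) (fun _ => v)) y
      = dder (fun _ => v) (gV g (sharp g α) (fun _ => u)) y := by
    rw [key, key, Finset.sum_comm]
    refine Finset.sum_congr rfl fun i _ => Finset.sum_congr rfl fun j _ => ?_
    rw [hc y hy j i]; ring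
  linarith

theorem closed_symm {U : Set (Pt n)} (hU : IsOpen U) {g : Met n} (hg : IsRiemannOn U g)
    {α : OneForm n} (hα : SmoothSec U α) (hc : IsClosedOn U α) {y : Pt n} (hy : y ∈ U)
    (X Y : VF n) :
    bil (g y) (covV g X (sharp g α) y) (Y y) = bil (g y) (covV g Y (sharp g α) y) (X y) :=
  closed_symm_const hU hg hα hc hy (X y) (Y y)

theorem force_pair (g : Met n) (α β : OneForm n) (x v : Pt n) :
    ∑ i, force g α β x i * v i = (1/2) * fderiv ℝ (gF g α β) x v := by
  rw [fderiv_pd, Finset.mul_sum]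
  refine Finset.sum_congr rfl fun i _ => ?_
  simp only [force, dF]; ring

theorem fderiv_gF {U : Set (Pt n)} (hU : IsOpen U) {g : Met n} (hg : IsRiemannOn U g)
    {α β : OneForm n} (hα : SmoothSec U α) (hβ : SmoothSec U β)
    (hcα : IsClosedOn U α) (hcβ : IsClosedOn U β) {y : Pt n} (hy : y ∈ U) (v : Pt n) :
    fderiv ℝ (gF g α β) y v = bil (g y) (covV g (sharp g α) (sharp g β) y
      + covV g (sharp g β) (sharp g α) y) v := by
  have e : gF g α β =ᶠ[nhds y] gV g (sharp g α) (sharp g β) := by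
    filter_upwards [hU.mem_nhds hy] with z hz
    exact gF_eq hg hz
  rw [e.fderiv_eq]
  have h := compat hU hg (Z := fun _ => v) (smooth_sharp hg hα) (smooth_sharp hg hβ) hy
  have h1 := closed_symm hU hg hα hcα hy (fun _ => v) (sharp g β)
  have h2 := closed_symm hU hg hβ hcβ hy (fun _ => v) (sharp g α)
  rw [bil_symm (hg.2 y hy).1 (sharp g α y), h1, h2] at h
  rw [bil_add_left, add_comm]
  exact h

theorem force_eq {U : Set (Pt n)} (hU : IsOpen U) {g : Met n} (hg : IsRiemannOn U g)
    {α β : OneForm n} (hα : SmoothSec U α) (hβ : SmoothSec U β)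
    (hcα : IsClosedOn U α) (hcβ : IsClosedOn U β) {y : Pt n} (hy : y ∈ U) :
    force g α β y = (g y).mulVec ((1/2 : ℝ) • (covV g (sharp g α) (sharp g β) y
      + covV g (sharp g β) (sharp g α) y)) := by
  funext i
  have h := force_pair g α β y (Pi.single i 1)
  rw [fderiv_gF hU hg hα hβ hcα hcβ hy, ← bil_smul_left, bil_eq, (hg.2 y hy).1.eq] at h
  simpa [Pi.single_apply] using h

end RG

namespace RG

variable {n : ℕ}

/-- Curvature of two gradient fields through second derivatives. -/
theorem curv_lemma {U : Set (Pt n)} (hU : IsOpen U) {g : Met n} (hg : IsRiemannOn U g)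
    {α β : OneForm n} (hα : SmoothSec U α) (hβ : SmoothSec U β)
    (hcα : IsClosedOn U α) (hcβ : IsClosedOn U β) {x : Pt n} (hx : x ∈ U) :
    gV g (Rcurv g (sharp g α) (sharp g β) (sharp g β)) (sharp g α) x =
      (1/2) * dder (sharp g α) (dder (sharp g α) (gF g β β)) x
      - dder (sharp g β) (dder (sharp g α) (gF g α β)) x
      + (1/2) * dder (sharp g β) (dder (sharp g β) (gF g α α)) x
      - bil (g x) (covV g (sharp g β) (sharp g β) x) (covV g (sharp g α) (sharp g α) x)
      + bil (g x) (covV g (sharp g α) (sharp g β) x) (covV g (sharp g β) (sharp g α) x)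
      - bil (g x) (covV g (sharp g α) (sharp g β) x)
        (covV g (sharp g α) (sharp g β) x - covV g (sharp g β) (sharp g α) x) := by
  have hA := smooth_sharp hg hα
  have hB := smooth_sharp hg hβ
  have hfbb : ContDiffOn ℝ (⊤ : ℕ∞) (gF g β β) U := smooth_ev (smooth_ginv hg) hβ hβ
  have hfab : ContDiffOn ℝ (⊤ : ℕ∞) (gF g α β) U := smooth_ev (smooth_ginv hg) hα hβ
  have hfaa : ContDiffOn ℝ (⊤ : ℕ∞) (gF g α α) U := smooth_ev (smooth_ginv hg) hα hα
  have Sab : ∀ y ∈ U, dder (sharp g α) (gF g α β) y =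
      bil (g y) (covV g (sharp g α) (sharp g β) y) (sharp g α y)
      + bil (g y) (covV g (sharp g β) (sharp g α) y) (sharp g α y) := fun y hy => by
    rw [dder, fderiv_gF hU hg hα hβ hcα hcβ hy, bil_add_left]
  have Sbb : ∀ y ∈ U, dder (sharp g α) (gF g β β) y =
      2 * bil (g y) (covV g (sharp g β) (sharp g β) y) (sharp g α y) := fun y hy => by
    rw [dder, fderiv_gF hU hg hβ hβ hcβ hcβ hy, bil_add_left]; ring
  have Saa : ∀ y ∈ U, dder (sharp g β) (gF g α α) y =
      2 * bil (g y) (covV g (sharp g β) (sharp g α) y) (sharp g α y) := fun y hy => by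
    rw [dder, fderiv_gF hU hg hα hα hcα hcα hy, bil_add_left,
      closed_symm hU hg hα hcα hy (sharp g α) (sharp g β)]; ring
  have d1 := smooth_dder hU hA hfbb
  have d2 := smooth_dder hU hA hfab
  have d3 := smooth_dder hU hB hfaa
  have E1 : dder (sharp g α) (gV g (covV g (sharp g β) (sharp g β)) (sharp g α)) x
      = (1/2) * dder (sharp g α) (dder (sharp g α) (gF g β β)) x := by
    have e : gV g (covV g (sharp g β) (sharp g β)) (sharp g α)
        =ᶠ[nhds x] fun y => (1/2) * dder (sharp g α) (gF g β β) y := by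
      filter_upwards [hU.mem_nhds hx] with y hy
      rw [Sbb y hy]
      change bil (g y) _ _ = _
      ring
    conv_lhs => rw [dder, e.fderiv_eq, fderiv_const_mul (diffAt hU d1 hx)]
    rfl
  have E2 : dder (sharp g β) (gV g (covV g (sharp g α) (sharp g β)) (sharp g α)) x
      = dder (sharp g β) (dder (sharp g α) (gF g α β)) x
        - (1/2) * dder (sharp g β) (dder (sharp g β) (gF g α α)) x := by
    have e : gV g (covV g (sharp g α) (sharp g β)) (sharp g α)
        =ᶠ[nhds x] fun y => dder (sharp g α) (gF g α β) y
          - (1/2) * dder (sharp g β) (gF g α α) y := by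
      filter_upwards [hU.mem_nhds hx] with y hy
      rw [Sab y hy, Saa y hy]
      change bil (g y) _ _ = _
      ring
    conv_lhs => rw [dder, e.fderiv_eq, fderiv_fun_sub (diffAt hU d2 hx)
      ((diffAt hU d3 hx).const_mul _), fderiv_const_mul (diffAt hU d3 hx)]
    rfl
  rw [compat hU hg (smooth_cov hU hg hB hB) hA hx] at E1
  rw [compat hU hg (smooth_cov hU hg hA hB) hA hx] at E2
  have E3 := closed_symm hU hg hβ hcβ hx (bracket (sharp g α) (sharp g β)) (sharp g α)
  rw [torsion hU hg hA hB hx] at E3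
  have E4 : gV g (Rcurv g (sharp g α) (sharp g β) (sharp g β)) (sharp g α) x
      = bil (g x) (covV g (sharp g α) (covV g (sharp g β) (sharp g β)) x) (sharp g α x)
      - bil (g x) (covV g (sharp g β) (covV g (sharp g α) (sharp g β)) x) (sharp g α x)
      - bil (g x) (covV g (bracket (sharp g α) (sharp g β)) (sharp g β) x) (sharp g α x) := by
    rw [← bil_sub_left, ← bil_sub_left]
    rfl
  rw [E4, E3]
  linarith

end RG

/-- **Mario's formula via force and stress**: with `X_α, X_β` locally constant
extensions of `α♯(x)`, `β♯(x)` (conditions (1)–(4)),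
`g(R(α♯,β♯)β♯,α♯)(x) = R₁₁ + R₁₂ + R₂ + R₃`. -/
theorem mario_formula_force_stress {n : ℕ} (U : Set (Pt n)) (hU : IsOpen U)
    (g : Met n) (hg : IsRiemannOn U g)
    (α β : OneForm n) (hα : SmoothSec U α) (hβ : SmoothSec U β)
    (hcα : IsClosedOn U α) (hcβ : IsClosedOn U β)
    (x : Pt n) (hx : x ∈ U)
    (Xa Xb : VF n) (V : Set (Pt n)) (hV : IsOpen V) (hxV : x ∈ V) (hVU : V ⊆ U)
    (hXa : SmoothSec V Xa) (hXb : SmoothSec V Xb)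
    (h1a : Xa x = sharp g α x) (h1b : Xb x = sharp g β x)
    (h3aa : ∀ y ∈ V, lieF Xa α y = 0) (h3ab : ∀ y ∈ V, lieF Xa β y = 0)
    (h3ba : ∀ y ∈ V, lieF Xb α y = 0) (h3bb : ∀ y ∈ V, lieF Xb β y = 0)
    (h4 : ∀ y ∈ V, bracket Xa Xb y = 0) :
    gV g (Rcurv g (sharp g α) (sharp g β) (sharp g β)) (sharp g α) x =
      (1/2) * ( evCo (lieCo Xa (lieCo Xa (ginv g))) β β x
                - 2 * evCo (lieCo Xa (lieCo Xb (ginv g))) α β x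
                + evCo (lieCo Xb (lieCo Xb (ginv g))) α α x )
      + ( (∑ i, force g α α x i * stress g β β Xb x i)
          + (∑ i, force g β β x i * stress g α α Xa x i)
          - (∑ i, force g α β x i * (stress g α β Xb x i + stress g β α Xa x i)) )
      + ( gF g (force g α β) (force g α β) x
          - gF g (force g α α) (force g β β) x )
      + ( - (3/4) * ∑ i, ∑ j, g x i j * (stress g α β Xb x i - stress g β α Xa x i)
            * (stress g α β Xb x j - stress g β α Xa x j) ) := by
  have hg' : IsRiemannOn V g := ⟨fun i j => (hg.1 i j).mono hVU, fun y hy => hg.2 y (hVU hy)⟩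
  have hα' : SmoothSec V α := fun i => (hα i).mono hVU
  have hβ' : SmoothSec V β := fun i => (hβ i).mono hVU
  have hcα' : IsClosedOn V α := fun y hy => hcα y (hVU hy)
  have hcβ' : IsClosedOn V β := fun y hy => hcβ y (hVU hy)
  clear hg hα hβ hcα hcβ
  have hA := smooth_sharp hg' hα'
  have hB := smooth_sharp hg' hβ'
  have hG := smooth_ginv hg'
  have hfbb : ContDiffOn ℝ (⊤ : ℕ∞) (gF g β β) V := smooth_ev hG hβ' hβ'
  have hfab : ContDiffOn ℝ (⊤ : ℕ∞) (gF g α β) V := smooth_ev hG hα' hβ'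
  have hfaa : ContDiffOn ℝ (⊤ : ℕ∞) (gF g α α) V := smooth_ev hG hα' hα'
  have L1 : evCo (lieCo Xa (lieCo Xa (ginv g))) β β x = dder Xa (dder Xa (gF g β β)) x :=
    ev_lie_lie hV hG hXa hβ' hβ' h3ab h3ab h3ab h3ab hxV
  have L2 : evCo (lieCo Xa (lieCo Xb (ginv g))) α β x = dder Xa (dder Xb (gF g α β)) x :=
    ev_lie_lie hV hG hXb hα' hβ' h3aa h3ab h3ba h3bb hxV
  have L3 : evCo (lieCo Xb (lieCo Xb (ginv g))) α α x = dder Xb (dder Xb (gF g α α)) x :=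
    ev_lie_lie hV hG hXb hα' hα' h3ba h3ba h3ba h3ba hxV
  rw [dder_dder hV hfbb hXa hxV] at L1
  rw [dder_dder hV hfab hXb hxV] at L2
  rw [dder_dder hV hfaa hXb hxV] at L3
  have st : ∀ (ω η : OneForm n) (X : VF n), SmoothSec V η → SmoothSec V X →
      stress g ω η X x = fderiv ℝ (sharp g η) x (sharp g ω x) - fderiv ℝ X x (sharp g ω x) := by
    intro ω η X hη hX
    unfold stress
    rw [fderiv_fun_sub (diffAtV hV (smooth_sharp hg' hη) hxV) (diffAtV hV hX hxV)]
    rfl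
  have hbr := h4 x hxV
  rw [bracket_eq hV hXa hXb hxV, h1a, h1b] at hbr
  have hbr' := sub_eq_zero.1 hbr
  have hT := torsion hV hg' hA hB hxV
  rw [bracket_eq hV hA hB hxV] at hT
  have hdiff : stress g α β Xb x - stress g β α Xa x
      = covV g (sharp g α) (sharp g β) x - covV g (sharp g β) (sharp g α) x := by
    rw [← hT, st α β Xb hβ' hXb, st β α Xa hα' hXa, hbr']
    abel
  have R3 : ∑ i, ∑ j, g x i j * (stress g α β Xb x i - stress g β α Xa x i)
            * (stress g α β Xb x j - stress g β α Xa x j)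
      = bil (g x) (covV g (sharp g α) (sharp g β) x - covV g (sharp g β) (sharp g α) x)
        (covV g (sharp g α) (sharp g β) x - covV g (sharp g β) (sharp g α) x) := by
    rw [← hdiff]; rfl
  have hbinv : ∀ ω η : OneForm n, gF g ω η x = bil (g x)⁻¹ (ω x) (η x) := fun _ _ => rfl
  have hs := (hg'.2 x hxV).1
  have hd := det_unit hg' hxV
  have P3 : (∑ i, force g α β x i * (stress g α β Xb x i + stress g β α Xa x i))
      = (1/2) * fderiv ℝ (gF g α β) x (stress g α β Xb x + stress g β α Xa x) :=
    force_pair g α β x _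
  have hdf := fderiv_gF hV hg' hα' hβ' hcα' hcβ' hxV
    (fderiv ℝ (sharp g β) x (sharp g α x) - fderiv ℝ (sharp g α) x (sharp g β x))
  have hsymm := bil_symm hs (covV g (sharp g α) (sharp g β) x) (covV g (sharp g β) (sharp g α) x)
  have hsymm' := bil_symm hs (covV g (sharp g α) (sharp g α) x) (covV g (sharp g β) (sharp g β) x)
  rw [hT] at hdf
  rw [← hT] at hdf
  have hdf2 : fderiv ℝ (gF g α β) x (fderiv ℝ (sharp g β) x (sharp g α x))
      - fderiv ℝ (gF g α β) x (fderiv ℝ (sharp g α) x (sharp g β x))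
      = bil (g x) (covV g (sharp g α) (sharp g β) x) (covV g (sharp g α) (sharp g β) x)
      - bil (g x) (covV g (sharp g β) (sharp g α) x) (covV g (sharp g β) (sharp g α) x) := by
    rw [← map_sub, hdf, hT, bil_add_left, bil_sub_right, bil_sub_right]
    linarith
  have hsnd := snd_symm hV hfab hxV (sharp g α x) (sharp g β x)
  rw [curv_lemma hV hg' hα' hβ' hcα' hcβ' hxV, dder_dder hV hfbb hA hxV, dder_dder hV hfab hA hxV,
    dder_dder hV hfaa hB hxV, L1, L2, L3, R3, P3, force_pair, force_pair, hbinv, hbinv,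
    force_eq hV hg' hα' hβ' hcα' hcβ' hxV, force_eq hV hg' hα' hα' hcα' hcα' hxV,
    force_eq hV hg' hβ' hβ' hcβ' hcβ' hxV, bil_inv hs hd, bil_inv hs hd,
    st α β Xb hβ' hXb, st β α Xa hα' hXa, st α α Xa hα' hXa, st β β Xb hβ' hXb, h1a, h1b, hbr']
  simp only [bil_smul_left, bil_smul_right, bil_add_left, bil_add_right, bil_sub_left,
    bil_sub_right, map_add, map_sub]
  linarith
end
end
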